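/- arXiv:1709.03037 — 6 statements merged into one kernel-verified Lean document; each statement's English description precedes it below -/
import Mathlib

section
/- Let n ≥ 1 and let a, b be nonzero real numbers with a ≠ −b. Define P_V(z) := a(z^{2n} + 1) + b·Σ_{j=1}^{2n−1} (−1)^{j+1} z^j. Then P_V is a real self-reciprocal polynomial of degree 2n and for every nonzero complex z, P_V(z) = z^n · ( a·V_n(x) + (a+b)·V_{n−1}(x) ) where x = (z + z⁻¹)/2 and V_k(x) := U_k(x) − U_{k−1}(x). -/
open Polynomial

/-- Alternating sum identity for the third-kind Chebyshev polynomial. -/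
theorem V_aux (z : ℂ) (hz : z ≠ 0) (n : ℕ) :
    z ^ n * (Polynomial.Chebyshev.U ℂ n
      - Polynomial.Chebyshev.U ℂ ((n : ℤ) - 1)).eval ((z + z⁻¹) / 2)
      = ∑ j ∈ Finset.range (2 * n + 1), (-z) ^ j := by
  induction n using Nat.twoStepInduction with
  | zero => simp
  | one =>
    simp [Finset.sum_range_succ]
    field_simp
    ring
  | more n ih1 ih2 =>
    have e1 : ∑ j ∈ Finset.range (2 * (n + 1) + 1), (-z) ^ j
        = ∑ j ∈ Finset.range (2 * n + 1), (-z) ^ j + (-z) ^ (2 * n + 1) + (-z) ^ (2 * n + 2) := by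
      rw [show 2 * (n + 1) + 1 = 2 * n + 1 + 1 + 1 by ring, Finset.sum_range_succ,
        Finset.sum_range_succ]
    have e2 : ∑ j ∈ Finset.range (2 * (n + 2) + 1), (-z) ^ j
        = ∑ j ∈ Finset.range (2 * (n + 1) + 1), (-z) ^ j + (-z) ^ (2 * n + 3)
          + (-z) ^ (2 * n + 4) := by
      rw [show 2 * (n + 2) + 1 = 2 * (n + 1) + 1 + 1 + 1 by ring, Finset.sum_range_succ,
        Finset.sum_range_succ]
      ring
    have u1 : Polynomial.Chebyshev.U ℂ ((n + 2 : ℕ) : ℤ) = 2 * X * Polynomial.Chebyshev.U ℂ ((n + 1 : ℕ) : ℤ)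
        - Polynomial.Chebyshev.U ℂ (n : ℤ) := by
      have := Polynomial.Chebyshev.U_add_two ℂ (n : ℤ)
      push_cast
      exact this
    have u2 : Polynomial.Chebyshev.U ℂ (((n + 2 : ℕ) : ℤ) - 1)
        = 2 * X * Polynomial.Chebyshev.U ℂ (((n + 1 : ℕ) : ℤ) - 1)
        - Polynomial.Chebyshev.U ℂ ((n : ℤ) - 1) := by
      have := Polynomial.Chebyshev.U_add_two ℂ ((n : ℤ) - 1)
      convert this using 3 <;> push_cast <;> ring_nf
    rw [u1, u2]
    simp only [eval_sub, eval_mul, eval_X, eval_ofNat] at ih1 ih2 ⊢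
    have hx : z * (2 * ((z + z⁻¹) / 2)) = z ^ 2 + 1 := by field_simp
    rw [e2]
    rw [e1] at ih2 ⊢
    generalize (∑ j ∈ Finset.range (2 * n + 1), (-z) ^ j) = A at *
    generalize (z + z⁻¹) / 2 = x at *
    have p1 : (-z) ^ (2 * n + 1) = - (z * z ^ (2 * n)) := by rw [pow_succ, pow_mul, pow_mul]; ring
    have p2 : (-z) ^ (2 * n + 2) = z ^ 2 * z ^ (2 * n) := by
      rw [pow_add, pow_mul, pow_mul]; ring
    have p3 : (-z) ^ (2 * n + 3) = - (z ^ 3 * z ^ (2 * n)) := by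
      rw [pow_add, pow_mul, pow_mul]; ring
    have p4 : (-z) ^ (2 * n + 4) = z ^ 4 * z ^ (2 * n) := by
      rw [pow_add, pow_mul, pow_mul]; ring
    rw [p1, p2] at ih2
    rw [p1, p2, p3, p4]
    generalize eval x (Polynomial.Chebyshev.U ℂ ((n + 1 : ℕ) : ℤ)) = c1 at *
    generalize eval x (Polynomial.Chebyshev.U ℂ (((n + 1 : ℕ) : ℤ) - 1)) = c2 at *
    generalize eval x (Polynomial.Chebyshev.U ℂ ((n : ℕ) : ℤ)) = c3 at *
    generalize eval x (Polynomial.Chebyshev.U ℂ (((n : ℕ) : ℤ) - 1)) = c4 at *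
    linear_combination (z ^ 2 + 1) * ih2 - z ^ 2 * ih1 + z ^ (n + 1) * (c1 - c2) * hx

/-- Let `n ≥ 1` and `a, b` be nonzero reals with `a ≠ -b`.  Then
`P_V(z) = a(z^(2n) + 1) + b Σ_{j=1}^{2n-1} (-1)^(j+1) z^j` is a real self-reciprocal
polynomial of degree `2n`, and for every nonzero complex `z`,
`P_V(z) = z^n (a V_n(x) + (a+b) V_{n-1}(x))` with `x = (z + z⁻¹)/2`, where
`V_k := U_k - U_{k-1}` is the Chebyshev polynomial of the third kind. -/
theorem PV_selfReciprocal_and_chebyshev (n : ℕ) (hn : 1 ≤ n) (a b : ℝ)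
    (ha : a ≠ 0) (hb : b ≠ 0) (hab : a ≠ -b) (PV : Polynomial ℝ)
    (hPV : PV = C a * (X ^ (2 * n) + 1)
        + C b * ∑ j ∈ Finset.Icc 1 (2 * n - 1), C ((-1 : ℝ) ^ (j + 1)) * X ^ j) :
    PV.natDegree = 2 * n ∧
    (∀ i ≤ 2 * n, PV.coeff i = PV.coeff (2 * n - i)) ∧
    (∀ z : ℂ, z ≠ 0 →
      aeval z PV = z ^ n *
        ((a : ℂ) * (Polynomial.Chebyshev.U ℂ n
            - Polynomial.Chebyshev.U ℂ ((n : ℤ) - 1)).eval ((z + z⁻¹) / 2)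
          + ((a : ℂ) + (b : ℂ)) * (Polynomial.Chebyshev.U ℂ ((n : ℤ) - 1)
            - Polynomial.Chebyshev.U ℂ ((n : ℤ) - 2)).eval ((z + z⁻¹) / 2))) := by
  have hc : ∀ i, PV.coeff i = a * ((if i = 2 * n then 1 else 0) + (if i = 0 then 1 else 0))
      + b * (if 1 ≤ i ∧ i ≤ 2 * n - 1 then (-1 : ℝ) ^ (i + 1) else 0) := by
    intro i
    rw [hPV]
    simp only [coeff_add, coeff_C_mul, coeff_X_pow, coeff_one, finset_sum_coeff, mul_ite, mul_one,
      mul_zero, Finset.sum_ite_eq, Finset.mem_Icc]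
  refine ⟨?_, ?_, ?_⟩
  · apply natDegree_eq_of_le_of_coeff_ne_zero
    · rw [natDegree_le_iff_coeff_eq_zero]
      intro i hi
      rw [hc, if_neg (by omega), if_neg (by omega), if_neg (by omega)]
      simp
    · rw [hc, if_pos rfl, if_neg (by omega), if_neg (by omega)]
      simpa using ha
  · intro i hi
    rw [hc, hc]
    by_cases h0 : i = 0
    · subst h0
      rw [if_neg (by omega), if_pos rfl, if_neg (by omega), if_pos (by omega), if_neg (by omega),
        if_neg (by omega)]
      ring
    by_cases h1 : i = 2 * n
    · rw [if_pos h1, if_neg (by omega), if_neg (by omega), if_neg (by omega), if_pos (by omega),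
        if_neg (by omega)]
      ring
    rw [if_neg (by omega), if_neg (by omega), if_pos (by omega), if_neg (by omega),
      if_neg (by omega), if_pos (by omega)]
    have : (-1 : ℝ) ^ (i + 1) = (-1) ^ (2 * n - i + 1) := by
      rcases Nat.even_or_odd (i + 1) with h | h
      · have h' : Even (2 * n - i + 1) := by grind
        rw [h.neg_one_pow, h'.neg_one_pow]
      · have h' : Odd (2 * n - i + 1) := by grind
        rw [h.neg_one_pow, h'.neg_one_pow]
    rw [this]
  · intro z hz
    obtain ⟨m, rfl⟩ : ∃ m, n = m + 1 := ⟨n - 1, by omega⟩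
    have v1 := V_aux z hz (m + 1)
    have v2 := V_aux z hz m
    have s1 : ∑ j ∈ Finset.Icc 1 (2 * (m + 1) - 1), (-1 : ℂ) ^ (j + 1) * z ^ j
        = z * ∑ j ∈ Finset.range (2 * m + 1), (-z) ^ j := by
      rw [show Finset.Icc 1 (2 * (m + 1) - 1) = Finset.Ico 1 (2 * m + 2) by ext; simp; omega,
        Finset.sum_Ico_eq_sum_range, Finset.mul_sum]
      apply Finset.sum_congr rfl
      intro j _
      rw [neg_pow z]
      ring
    have s2 : ∑ j ∈ Finset.range (2 * (m + 1) + 1), (-z) ^ j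
        = 1 - z * ∑ j ∈ Finset.range (2 * m + 1), (-z) ^ j + z ^ (2 * (m + 1)) := by
      rw [Finset.sum_range_succ, show 2 * (m + 1) = 2 * m + 1 + 1 by ring,
        Finset.sum_range_succ', Finset.mul_sum]
      have : (-z) ^ (2 * m + 1 + 1) = z ^ (2 * m + 1 + 1) := Even.neg_pow ⟨m + 1, by ring⟩ z
      rw [this]
      simp only [pow_succ, ← Finset.sum_mul, ← Finset.mul_sum]
      ring
    have hP : aeval z PV = a * (z ^ (2 * (m + 1)) + 1)
        + b * ∑ j ∈ Finset.Icc 1 (2 * (m + 1) - 1), (-1 : ℂ) ^ (j + 1) * z ^ j := by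
      rw [hPV]
      simp
    rw [hP, s1]
    rw [s2] at v1
    rw [show (((m + 1 : ℕ) : ℤ) - 2) = (m : ℤ) - 1 by push_cast; ring]
    rw [show (((m + 1 : ℕ) : ℤ) - 1) = (m : ℤ) by push_cast; ring] at v1 ⊢
    linear_combination (-(a : ℂ)) * v1 - z * (a + b) * v2
end

section
/- Let n ≥ 2 and let c be a nonzero real number, and set R(x) := T_n(x) − c·T_{n−1}(x). Then: (i) all n complex zeros of R are real and simple, and at most one of them lies outside the open interval (−1, 1); (ii) if −1 < c < 1, then all zeros of R lie in (−1, 1); (iii) if c < −1, then the smallest zero of R is less than −1; (iv) if c > 1, then the largest zero of R is greater than 1. -/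
open Polynomial

/-- A degree `n` polynomial with `n` sign changes splits with simple interlacing roots. -/
theorem roots_of_sign_changes (n : ℕ) (P : Polynomial ℝ) (hP : P.degree = n) (s : ℝ)
    (w : ℕ → ℝ) (hw : ∀ j < n, w j < w (j + 1))
    (hs : ∀ j ≤ n, 0 < (-1 : ℝ) ^ j * (s * P.eval (w j))) :
    ∃ x : Fin n → ℝ, StrictMono x ∧ P = C P.leadingCoeff * ∏ i : Fin n, (X - C (x i)) ∧
      ∀ i : Fin n, w i < x i ∧ x i < w (i + 1) := by
  have key : ∀ i : Fin n, ∃ x : ℝ, (w i < x ∧ x < w (i + 1)) ∧ P.eval x = 0 := by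
    intro i
    have h1 := hs i i.2.le
    have h2 := hs (i + 1) i.2
    have hlt := hw i i.2
    have hf : ContinuousOn (fun x => (-1 : ℝ) ^ (i : ℕ) * (s * P.eval x))
        (Set.Icc (w i) (w (i + 1))) := by fun_prop
    have h3 : (-1 : ℝ) ^ (i : ℕ) * (s * P.eval (w (i + 1))) < 0 := by
      rw [pow_succ] at h2; linarith
    obtain ⟨x, hx, hx0⟩ := intermediate_value_Ioo' hlt.le hf ⟨h3, h1⟩
    refine ⟨x, hx, ?_⟩
    have hs0 : s ≠ 0 := by
      rintro rfl; simp at h1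
    simpa [hs0] using hx0
  choose x hx hx0 using key
  have hwm : ∀ a b : ℕ, a ≤ b → b ≤ n → w a ≤ w b := by
    intro a b hab
    induction b, hab using Nat.le_induction with
    | base => intro _; exact le_rfl
    | succ b hab ih => intro hb; exact (ih (by omega)).trans (hw b (by omega)).le
  have hmono : StrictMono x := by
    intro i j hij
    exact (hx i).2.trans_le ((hwm _ _ hij j.2.le).trans (hx j).1.le)
  refine ⟨x, hmono, ?_, hx⟩
  have hP0 : P ≠ 0 := by rintro rfl; simp at hP
  have hl : P.leadingCoeff ≠ 0 := leadingCoeff_ne_zero.2 hP0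
  have hmon : (∏ i : Fin n, (X - C (x i))).Monic := monic_prod_of_monic _ _ fun i _ => monic_X_sub_C _
  have hdeg : P.degree = (C P.leadingCoeff * ∏ i : Fin n, (X - C (x i))).degree := by
    rw [degree_C_mul hl, degree_prod, hP]; simp
  refine eq_of_degree_sub_lt_of_eval_index_eq (s := Finset.univ) (v := x)
    hmono.injective.injOn ?_ ?_
  · have := degree_sub_lt hdeg hP0 (by simp [hmon.leadingCoeff])
    simpa [hP] using this
  · intro i _
    rw [hx0, eval_mul, eval_prod, Finset.prod_eq_zero (Finset.mem_univ i) (by simp), mul_zero]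

theorem quasi_degree (m : ℕ) (c : ℝ) :
    (Chebyshev.T ℝ (m + 1 : ℕ) - C c * Chebyshev.T ℝ m).degree = (m + 1 : ℕ) ∧
    (Chebyshev.T ℝ (m + 1 : ℕ) - C c * Chebyshev.T ℝ m).leadingCoeff = 2 ^ m := by
  have h : (C c * Chebyshev.T ℝ m).degree < (Chebyshev.T ℝ (m + 1 : ℕ)).degree := by
    have hle : (C c * Chebyshev.T ℝ m).degree ≤ (Chebyshev.T ℝ m).degree := by
      rw [← smul_eq_C_mul]; exact degree_smul_le _ _
    refine hle.trans_lt ?_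
    rw [Chebyshev.degree_T, Chebyshev.degree_T]
    simp only [Int.natAbs_natCast]
    exact_mod_cast Nat.lt_succ_self m
  constructor
  · rw [degree_sub_eq_left_of_degree_lt h, Chebyshev.degree_T, Int.natAbs_natCast]
  · rw [leadingCoeff_sub_of_degree_lt h, Chebyshev.leadingCoeff_T, Int.natAbs_natCast]; simp

theorem quasi_pos (m : ℕ) (c : ℝ) : ∀ᶠ x in Filter.atTop,
    0 < (Chebyshev.T ℝ (m + 1 : ℕ) - C c * Chebyshev.T ℝ m).eval x := by
  obtain ⟨h1, h2⟩ := quasi_degree m c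
  refine (tendsto_atTop_of_leadingCoeff_nonneg _ ?_ ?_).eventually_gt_atTop 0
  · rw [h1]; exact_mod_cast Nat.succ_pos m
  · rw [h2]; positivity

theorem quasi_neg (m : ℕ) (c x : ℝ) :
    (-1 : ℝ) ^ (m + 1) * (Chebyshev.T ℝ (m + 1 : ℕ) - C c * Chebyshev.T ℝ m).eval (-x) =
    (Chebyshev.T ℝ (m + 1 : ℕ) - C (-c) * Chebyshev.T ℝ m).eval x := by
  have hz : ∀ k : ℕ, (((k : ℤ).negOnePow : ℤ) : ℝ) = (-1) ^ k := by
    intro k; simp [Int.negOnePow]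
  have hq : ((-1 : ℝ) ^ m) * (-1) ^ m = 1 := by rw [← mul_pow]; simp
  simp only [eval_sub, eval_mul, eval_C, Chebyshev.T_eval_neg, hz, pow_succ]
  linear_combination (eval x (Chebyshev.T ℝ (m + 1 : ℕ)) + c * eval x (Chebyshev.T ℝ m)) * hq

theorem quasi_node (m : ℕ) (hm : 1 ≤ m) (c : ℝ) (j : ℕ) (h1 : 1 ≤ j) (h2 : j ≤ m) :
    0 < (-1 : ℝ) ^ j * ((-1 : ℝ) ^ (m + 1) *
      (Chebyshev.T ℝ (m + 1 : ℕ) - C c * Chebyshev.T ℝ m).eval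
        (-Real.cos ((2 * j - 1) * Real.pi / (2 * m)))) := by
  have hm' : (1 : ℝ) ≤ m := by exact_mod_cast hm
  have h1' : (1 : ℝ) ≤ j := by exact_mod_cast h1
  have h2' : (j : ℝ) ≤ m := by exact_mod_cast h2
  have hpi := Real.pi_pos
  rw [quasi_neg]
  set φ := (2 * j - 1) * Real.pi / (2 * m) with hφ
  have e1 : m * φ = j * Real.pi - Real.pi / 2 := by rw [hφ]; field_simp
  have hpos : 0 < φ := by
    apply div_pos <;> nlinarith
  have hlt : φ < Real.pi := by
    rw [hφ, div_lt_iff₀ (by linarith)]; nlinarith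
  have hsin := Real.sin_pos_of_pos_of_lt_pi hpos hlt
  simp only [eval_sub, eval_mul, eval_C, Chebyshev.T_real_cos]
  have e2 : (((m + 1 : ℕ) : ℤ) : ℝ) * φ = (φ + j * Real.pi) - Real.pi / 2 := by
    push_cast; linarith
  have e3 : ((m : ℤ) : ℝ) * φ = j * Real.pi - Real.pi / 2 := by push_cast; exact e1
  rw [e2, e3, Real.cos_sub_pi_div_two, Real.cos_sub_pi_div_two, Real.sin_nat_mul_pi,
    Real.sin_add_nat_mul_pi]
  have hq : ((-1 : ℝ) ^ j) * (-1) ^ j = 1 := by rw [← mul_pow]; simp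
  have : (-1 : ℝ) ^ j * ((-1) ^ j * Real.sin φ - -c * 0) = Real.sin φ := by
    linear_combination Real.sin φ * hq
  rw [this]; exact hsin

theorem quasi_main (m : ℕ) (hm : 1 ≤ m) (c : ℝ) (R : Polynomial ℝ)
    (hR : R = Chebyshev.T ℝ (m + 1 : ℕ) - C c * Chebyshev.T ℝ m) :
    ∃ x : Fin (m + 1) → ℝ, StrictMono x ∧
      R = C ((2 : ℝ) ^ m) * ∏ i : Fin (m + 1), (X - C (x i)) ∧
      (∀ i, i ≠ Fin.last m → x i < 1) ∧ (∀ i, i ≠ 0 → -1 < x i) := by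
  obtain ⟨M, ⟨hM1, hM2⟩, hM⟩ := ((quasi_pos m c).and (quasi_pos m (-c))).and
    (Filter.eventually_gt_atTop (1 : ℝ)) |>.exists
  have hm' : (1 : ℝ) ≤ m := by exact_mod_cast hm
  have hpi := Real.pi_pos
  let v : ℕ → ℝ := fun j => -Real.cos ((2 * j - 1) * Real.pi / (2 * m))
  let w : ℕ → ℝ := fun j => if j = 0 then -M else if j = m + 1 then M else v j
  have hv : ∀ j, -1 ≤ v j ∧ v j ≤ 1 := fun j =>
    ⟨neg_le_neg (Real.cos_le_one _), by have := Real.neg_one_le_cos ((2 * j - 1) * Real.pi / (2 * m)); simp only [v]; linarith⟩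
  have hw0 : w 0 = -M := by simp [w]
  have hwn : w (m + 1) = M := by simp [w]
  have hwv : ∀ j, 1 ≤ j → j ≤ m → w j = v j := by
    intro j h1 h2
    simp only [w]
    rw [if_neg (by omega), if_neg (by omega)]
  have hq : ((-1 : ℝ) ^ (m + 1)) * (-1) ^ (m + 1) = 1 := by rw [← mul_pow]; simp
  obtain ⟨hd, hl⟩ := quasi_degree m c
  rw [← hR] at hd hl
  obtain ⟨x, hx, hprod, hi⟩ := roots_of_sign_changes (m + 1) R hd ((-1) ^ (m + 1)) w (by
    intro j hj
    rcases Nat.eq_zero_or_pos j with rfl | hj0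
    · rw [hw0, hwv _ le_rfl (by omega)]
      linarith [(hv (0 + 1)).1]
    · rcases Nat.lt_or_ge j m with hjm | hjm
      · rw [hwv j hj0 hjm.le, hwv _ (by omega) hjm]
        simp only [v]
        have h1 : (1 : ℝ) ≤ j := by exact_mod_cast hj0
        have h2 : (j : ℝ) + 1 ≤ m := by exact_mod_cast hjm
        apply neg_lt_neg
        apply Real.cos_lt_cos_of_nonneg_of_le_pi
        · apply div_nonneg <;> nlinarith
        · rw [div_le_iff₀ (by linarith)]; push_cast; nlinarith
        · push_cast; gcongr; linarith
      · obtain rfl : j = m := by omega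
        rw [hwn, hwv j hj0 le_rfl]
        linarith [(hv j).2]) (by
    intro j hj
    rw [hR]
    rcases Nat.eq_zero_or_pos j with rfl | hj0
    · rw [hw0, quasi_neg]; simpa using hM2
    · rcases Nat.lt_or_ge m j with hjm | hjm
      · obtain rfl : j = m + 1 := by omega
        rw [hwn, ← mul_assoc, hq, one_mul]; exact hM1
      · rw [hwv j hj0 hjm]
        exact quasi_node m hm c j hj0 hjm)
  refine ⟨x, hx, by rw [← hl]; exact hprod, ?_, ?_⟩
  · intro i hne
    have hlt : (i : ℕ) < m := Fin.val_lt_last hne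
    have := (hi i).2
    rw [hwv _ (by omega) (by omega)] at this
    exact this.trans_le (hv _).2
  · intro i hne
    have hlt : 0 < (i : ℕ) := Fin.pos_iff_ne_zero.2 hne
    have := (hi i).1
    rw [hwv _ (by omega) (by omega)] at this
    exact (hv _).1.trans_lt this

/-- Zeros of the first-kind Chebyshev quasi-orthogonal polynomial
`R = T_n - c T_{n-1}` of order one:  all `n` complex zeros are real and simple, at most
one lies outside `(-1,1)`; if `-1 < c < 1` all zeros lie in `(-1,1)`; if `c < -1` the
smallest zero is `< -1`; if `c > 1` the largest zero is `> 1`. -/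
theorem chebyshevT_quasiOrthogonal_zeros (n : ℕ) (hn : 2 ≤ n) (c : ℝ) (hc : c ≠ 0)
    (R : Polynomial ℝ)
    (hR : R = Polynomial.Chebyshev.T ℝ n - C c * Polynomial.Chebyshev.T ℝ ((n : ℤ) - 1)) :
    ∃ x : Fin n → ℝ, StrictMono x ∧
      R = C ((2 : ℝ) ^ (n - 1)) * ∏ i : Fin n, (X - C (x i)) ∧
      Set.ncard {i : Fin n | x i ∉ Set.Ioo (-1 : ℝ) 1} ≤ 1 ∧
      ((-1 < c ∧ c < 1) → ∀ i, x i ∈ Set.Ioo (-1 : ℝ) 1) ∧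
      (c < -1 → x ⟨0, by omega⟩ < -1) ∧
      (1 < c → 1 < x ⟨n - 1, by omega⟩) := by
  obtain ⟨m, rfl⟩ : ∃ m, n = m + 1 := ⟨n - 1, by omega⟩
  have hcast : (((m + 1 : ℕ) : ℤ) - 1) = (m : ℤ) := by push_cast; ring
  rw [hcast] at hR
  obtain ⟨x, hx, hprod, hA, hB⟩ := quasi_main m (by omega) c R hR
  have e1 : (2 : ℝ) ^ m * ∏ i, (1 - x i) = 1 - c := by
    have h : R.eval 1 = 1 - c := by rw [hR]; simp
    rw [hprod] at h
    simpa [eval_prod] using h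
  have e2 : (2 : ℝ) ^ m * ∏ i, (1 + x i) = 1 + c := by
    have h := quasi_neg m c 1
    rw [← hR, hprod] at h
    simp only [eval_mul, eval_prod, eval_sub, eval_C, eval_X, eval_pow, Chebyshev.T_eval_one] at h
    have h3 : ∏ i, (1 + x i) = (-1 : ℝ) ^ (m + 1) * ∏ i, (-1 - x i) := by
      have : ∀ i, 1 + x i = (-1) * (-1 - x i) := fun i => by ring
      simp only [this, Finset.prod_mul_distrib]
      simp
    rw [h3]; linear_combination h
  have h2m : (0 : ℝ) < 2 ^ m := by positivity
  -- the last and first factors carry the sign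
  have s1 : ∃ a : ℝ, 0 < a ∧ a * (1 - x (Fin.last m)) = 1 - c := by
    rw [Fin.prod_univ_castSucc] at e1
    refine ⟨2 ^ m * ∏ i : Fin m, (1 - x i.castSucc), mul_pos h2m (Finset.prod_pos ?_), ?_⟩
    · intro i _; linarith [hA i.castSucc (Fin.castSucc_lt_last i).ne]
    · rw [← e1]; ring
  have s2 : ∃ a : ℝ, 0 < a ∧ a * (1 + x 0) = 1 + c := by
    rw [Fin.prod_univ_succ] at e2
    refine ⟨2 ^ m * ∏ i : Fin m, (1 + x i.succ), mul_pos h2m (Finset.prod_pos ?_), ?_⟩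
    · intro i _; linarith [hB i.succ (Fin.succ_ne_zero i)]
    · rw [← e2]; ring
  obtain ⟨a, ha, ea⟩ := s1
  obtain ⟨b, hb, eb⟩ := s2
  have l1 : c < 1 → ∀ i, x i < 1 := by
    intro h i
    by_cases hi : i = Fin.last m
    · subst hi; by_contra! hh; nlinarith
    · exact hA i hi
  have l2 : -1 < c → ∀ i, -1 < x i := by
    intro h i
    by_cases hi : i = 0
    · subst hi; by_contra! hh; nlinarith
    · exact hB i hi
  refine ⟨x, hx, hprod, ?_, fun h i => ⟨l2 h.1 i, l1 h.2 i⟩, ?_, ?_⟩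
  · rw [Set.ncard_le_one (Set.toFinite _)]
    rcases lt_or_ge c 1 with h | h
    · have : ∀ i, x i ∉ Set.Ioo (-1 : ℝ) 1 → i = 0 := by
        intro i hi; by_contra h0; exact hi ⟨hB i h0, l1 h i⟩
      intro i hi j hj
      rw [this i hi, this j hj]
    · have : ∀ i, x i ∉ Set.Ioo (-1 : ℝ) 1 → i = Fin.last m := by
        intro i hi; by_contra h0; exact hi ⟨l2 (by linarith) i, hA i h0⟩
      intro i hi j hj
      rw [this i hi, this j hj]
  · intro h
    change x 0 < -1
    by_contra! hh; nlinarith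
  · intro h
    change 1 < x (Fin.last m)
    by_contra! hh; nlinarith
end

section
/- Let n ≥ 2 and let c be a nonzero real number, and set R(x) := U_n(x) − c·U_{n−1}(x). Then: (i) all n complex zeros of R are real and simple, and at most one of them lies outside the open interval (−1, 1); (ii) if −(n+1)/n < c < (n+1)/n, then all zeros of R lie in (−1, 1); (iii) if c < −(n+1)/n, then the smallest zero of R is less than −1; (iv) if c > (n+1)/n, then the largest zero of R is greater than 1. -/
open Polynomial

namespace ChebQO

/-- The polynomial of the statement. -/
noncomputable def P (n : ℕ) (c : ℝ) : Polynomial ℝ :=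
  Polynomial.Chebyshev.U ℝ n - C c * Polynomial.Chebyshev.U ℝ ((n : ℤ) - 1)

lemma degree_lt (n : ℕ) (hn : 2 ≤ n) (c : ℝ) :
    (C c * Polynomial.Chebyshev.U ℝ ((n : ℤ) - 1)).degree < (Polynomial.Chebyshev.U ℝ n).degree := by
  obtain ⟨m, rfl⟩ : ∃ m, n = m + 1 := ⟨n - 1, by omega⟩
  have h : ((m + 1 : ℕ) : ℤ) - 1 = (m : ℕ) := by push_cast; ring
  rw [h, Chebyshev.degree_U_natCast, ← smul_eq_C_mul]
  refine lt_of_le_of_lt (degree_smul_le _ _) ?_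
  rw [Chebyshev.degree_U_natCast]
  exact_mod_cast Nat.lt_succ_self m

lemma degree_P (n : ℕ) (hn : 2 ≤ n) (c : ℝ) : (P n c).degree = n := by
  unfold P
  rw [degree_sub_eq_left_of_degree_lt (degree_lt n hn c), Chebyshev.degree_U_natCast]

lemma lead_P (n : ℕ) (hn : 2 ≤ n) (c : ℝ) : (P n c).leadingCoeff = 2 ^ n := by
  unfold P
  rw [leadingCoeff_sub_of_degree_lt (degree_lt n hn c), Chebyshev.leadingCoeff_U_natCast]

lemma eval_P (n : ℕ) (c x : ℝ) : (P n c).eval x =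
    (Chebyshev.U ℝ n).eval x - c * (Chebyshev.U ℝ ((n : ℤ) - 1)).eval x := by
  simp [P]

lemma eval_neg_P (n : ℕ) (hn : 2 ≤ n) (c x : ℝ) :
    (P n c).eval (-x) = (-1) ^ n * (P n (-c)).eval x := by
  obtain ⟨m, rfl⟩ : ∃ m, n = m + 1 := ⟨n - 1, by omega⟩
  have h : ((m + 1 : ℕ) : ℤ) - 1 = (m : ℕ) := by push_cast; ring
  rw [eval_P, eval_P, h, Chebyshev.U_eval_neg, Chebyshev.U_eval_neg]
  simp only [Int.coe_negOnePow_natCast]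
  push_cast
  rw [pow_succ]
  ring

lemma eval_one_P (n : ℕ) (c : ℝ) : (P n c).eval 1 = n + 1 - c * n := by
  rw [eval_P, Chebyshev.U_eval_one, Chebyshev.U_eval_one]; push_cast; ring

lemma eval_cos_P (n : ℕ) (c : ℝ) (k : ℕ) (hk : 1 ≤ k) (hkn : k < n) :
    (P n c).eval (Real.cos (k * Real.pi / n)) = (-1) ^ k := by
  have hn0 : (0 : ℝ) < n := by exact_mod_cast (by omega : 0 < n)
  have hk0 : (0 : ℝ) < k := by exact_mod_cast hk
  have hkn' : (k : ℝ) < n := by exact_mod_cast hkn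
  have hs : 0 < Real.sin (k * Real.pi / n) := by
    apply Real.sin_pos_of_pos_of_lt_pi
    · positivity
    · rw [div_lt_iff₀ hn0]; nlinarith [Real.pi_pos]
  have h1 := Chebyshev.U_real_cos (k * Real.pi / n) (n : ℤ)
  have h2 := Chebyshev.U_real_cos (k * Real.pi / n) ((n : ℤ) - 1)
  have e1 : (((n : ℤ) : ℝ) + 1) * (k * Real.pi / n) = k * Real.pi / n + k * Real.pi := by
    push_cast; field_simp; ring
  have e2 : ((((n : ℤ) - 1 : ℤ) : ℝ) + 1) * (k * Real.pi / n) = k * Real.pi := by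
    push_cast; field_simp; ring
  rw [e1, Real.sin_add_nat_mul_pi] at h1
  rw [e2, Real.sin_nat_mul_pi] at h2
  rw [eval_P, mul_right_cancel₀ hs.ne' h1, (mul_eq_zero.mp h2).resolve_right hs.ne']
  ring

lemma ivt (p : Polynomial ℝ) {a b : ℝ} (hab : a < b) (h : p.eval a * p.eval b < 0) :
    ∃ x, a < x ∧ x < b ∧ p.eval x = 0 := by
  have hc : ContinuousOn (fun x => p.eval x) (Set.Icc a b) := p.continuous.continuousOn
  rcases mul_neg_iff.mp h with ⟨h1, h2⟩ | ⟨h1, h2⟩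
  · obtain ⟨x, hx, hx0⟩ := intermediate_value_Ioo' hab.le hc ⟨h2, h1⟩
    exact ⟨x, hx.1, hx.2, hx0⟩
  · obtain ⟨x, hx, hx0⟩ := intermediate_value_Ioo hab.le hc ⟨h1, h2⟩
    exact ⟨x, hx.1, hx.2, hx0⟩

lemma upper (n : ℕ) (hn : 2 ≤ n) (c : ℝ) :
    ∃ x, (P n c).eval x = 0 ∧ Real.cos (Real.pi / n) < x ∧
      (c < ((n : ℝ) + 1) / n → x < 1) ∧ (((n : ℝ) + 1) / n < c → 1 < x) := by
  have hn0 : (0 : ℝ) < n := by exact_mod_cast (by omega : 0 < n)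
  have hn1 : (1 : ℝ) < n := by exact_mod_cast (by omega : 1 < n)
  have hcos : Real.cos (Real.pi / n) < 1 := by
    rw [← Real.cos_zero]
    apply Real.cos_lt_cos_of_nonneg_of_le_pi le_rfl
    · exact div_le_self Real.pi_pos.le hn1.le
    · exact div_pos Real.pi_pos hn0
  have hv := eval_cos_P n c 1 le_rfl (by omega)
  have h1 := eval_one_P n c
  simp only [Nat.cast_one, one_mul, pow_one] at hv
  rcases lt_trichotomy c (((n : ℝ) + 1) / n) with h | h | h
  · have h' := (lt_div_iff₀ hn0).mp h
    obtain ⟨x, a, b, e⟩ := ivt (P n c) hcos (by rw [hv, h1]; linarith)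
    exact ⟨x, e, a, fun _ => b, fun h2 => absurd h2 h.not_gt⟩
  · refine ⟨1, ?_, hcos, fun h2 => absurd h2 h.not_lt, fun h2 => absurd h2 h.not_gt⟩
    rw [h1, h]; field_simp; ring
  · have h' := (div_lt_iff₀ hn0).mp h
    have ht := (P n c).tendsto_atTop_of_leadingCoeff_nonneg
      (by rw [degree_P n hn]; exact_mod_cast (by omega : 0 < n))
      (by rw [lead_P n hn]; positivity)
    obtain ⟨B, hB, hB1⟩ := ((ht.eventually_gt_atTop 0).and (Filter.eventually_gt_atTop 1)).exists
    obtain ⟨x, a, b, e⟩ := ivt (P n c) hB1 (by rw [h1]; exact mul_neg_of_neg_of_pos (by linarith) hB)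
    exact ⟨x, e, hcos.trans a, fun h2 => absurd h2 h.not_gt, fun _ => a⟩

/-- Separating points. -/
noncomputable def z (n j : ℕ) : ℝ := -Real.cos (j * Real.pi / n)

lemma z_lt (n : ℕ) (hn : 2 ≤ n) {i j : ℕ} (hij : i < j) (hj : j ≤ n) : z n i < z n j := by
  have hn0 : (0 : ℝ) < n := by exact_mod_cast (by omega : 0 < n)
  have hj' : (j : ℝ) ≤ n := by exact_mod_cast hj
  have hij' : (i : ℝ) < j := by exact_mod_cast hij
  unfold z
  apply neg_lt_neg
  apply Real.cos_lt_cos_of_nonneg_of_le_pi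
  · positivity
  · rw [div_le_iff₀ hn0]; nlinarith [Real.pi_pos]
  · have := Real.pi_pos
    gcongr

lemma z_le (n : ℕ) (hn : 2 ≤ n) {i j : ℕ} (hij : i ≤ j) (hj : j ≤ n) : z n i ≤ z n j := by
  rcases hij.eq_or_lt with rfl | h
  · rfl
  · exact (z_lt n hn h hj).le

lemma eval_z (n : ℕ) (hn : 2 ≤ n) (c : ℝ) (k : ℕ) (hk : 1 ≤ k) (hkn : k < n) :
    (P n c).eval (z n k) = (-1) ^ n * (-1) ^ k := by
  rw [z, eval_neg_P n hn, eval_cos_P n _ k hk hkn]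

lemma z_last (n : ℕ) (hn : 2 ≤ n) : z n (n - 1) = Real.cos (Real.pi / n) := by
  have hn0 : (n : ℝ) ≠ 0 := by exact_mod_cast (by omega : n ≠ 0)
  rw [z, ← Real.cos_pi_sub]
  congr 1
  rw [Nat.cast_sub (by omega)]
  field_simp
  push_cast
  ring

lemma exists_root (n : ℕ) (hn : 2 ≤ n) (c : ℝ) (i : ℕ) (hi : i < n) :
    ∃ x, (P n c).eval x = 0 ∧ (1 ≤ i → z n i < x) ∧ (i + 1 < n → x < z n (i + 1)) ∧
      (i = 0 → (-(((n : ℝ) + 1) / n) < c → -1 < x) ∧ (c < -(((n : ℝ) + 1) / n) → x < -1)) ∧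
      (i + 1 = n → (c < ((n : ℝ) + 1) / n → x < 1) ∧ (((n : ℝ) + 1) / n < c → 1 < x)) := by
  by_cases h0 : i = 0
  · subst h0
    obtain ⟨x, e, a, b, d⟩ := upper n hn (-c)
    refine ⟨-x, by rw [eval_neg_P n hn, e, mul_zero], by omega, fun _ => ?_, fun _ => ⟨fun h => ?_, fun h => ?_⟩,
      by omega⟩
    · simp only [z, zero_add, Nat.cast_one, one_mul]; linarith
    · have := b (by linarith); linarith
    · have := d (by linarith); linarith
  by_cases h1 : i + 1 = n
  · obtain ⟨x, e, a, b, d⟩ := upper n hn c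
    refine ⟨x, e, fun _ => ?_, by omega, by omega, fun _ => ⟨b, d⟩⟩
    have : i = n - 1 := by omega
    rw [this, z_last n hn]; exact a
  · obtain ⟨x, a, b, e⟩ := ivt (P n c) (z_lt n hn (Nat.lt_succ_self i) (by omega)) (by
      rw [eval_z n hn c i (by omega) hi, eval_z n hn c (i + 1) (by omega) (by omega)]
      rcases neg_one_pow_eq_or ℝ n with h | h <;> rcases neg_one_pow_eq_or ℝ i with h' | h' <;>
        rw [pow_succ, h, h'] <;> norm_num)
    exact ⟨x, e, fun _ => a, fun _ => b, by omega, by omega⟩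

end ChebQO

open ChebQO in
/-- Zeros of the second-kind Chebyshev quasi-orthogonal polynomial
`R = U_n - c U_{n-1}` of order one:  all `n` complex zeros are real and simple, at most
one lies outside `(-1,1)`; if `-(n+1)/n < c < (n+1)/n` all zeros lie in `(-1,1)`; if
`c < -(n+1)/n` the smallest zero is `< -1`; if `c > (n+1)/n` the largest zero is `> 1`. -/
theorem chebyshevU_quasiOrthogonal_zeros (n : ℕ) (hn : 2 ≤ n) (c : ℝ) (hc : c ≠ 0)
    (R : Polynomial ℝ)
    (hR : R = Polynomial.Chebyshev.U ℝ n - C c * Polynomial.Chebyshev.U ℝ ((n : ℤ) - 1)) :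
    ∃ x : Fin n → ℝ, StrictMono x ∧
      R = C ((2 : ℝ) ^ n) * ∏ i : Fin n, (X - C (x i)) ∧
      Set.ncard {i : Fin n | x i ∉ Set.Ioo (-1 : ℝ) 1} ≤ 1 ∧
      ((-(((n : ℝ) + 1) / n) < c ∧ c < ((n : ℝ) + 1) / n) →
        ∀ i, x i ∈ Set.Ioo (-1 : ℝ) 1) ∧
      (c < -(((n : ℝ) + 1) / n) → x ⟨0, by omega⟩ < -1) ∧
      (((n : ℝ) + 1) / n < c → 1 < x ⟨n - 1, by omega⟩) := by
  have hR' : R = P n c := hR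
  have hn0 : (0 : ℝ) < n := by exact_mod_cast (by omega : 0 < n)
  choose x hx0 hxl hxu hxa hxb using fun i : Fin n => exists_root n hn c i i.2
  have hmono : StrictMono x := by
    intro i j hij
    have hij' : (i : ℕ) < j := hij
    have := j.2
    exact (hxu i (by omega)).trans_le ((z_le n hn hij' j.2.le).trans (hxl j (by omega)).le)
  have hz0 : z n 0 = -1 := by simp [z]
  have hzn : z n n = 1 := by
    rw [z, mul_div_assoc, mul_div_cancel₀ _ hn0.ne']; simp
  have hlo : ∀ i : Fin n, (i : ℕ) ≠ 0 → -1 < x i := fun i hi => by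
    rw [← hz0]; exact (z_le n hn (Nat.zero_le _) i.2.le).trans_lt (hxl i (by omega))
  have hup : ∀ i : Fin n, (i : ℕ) + 1 ≠ n → x i < 1 := fun i hi => by
    have := i.2
    rw [← hzn]; exact (hxu i (by omega)).trans_le (z_le n hn (by omega) le_rfl)
  have hlo' : -(((n : ℝ) + 1) / n) < c → ∀ i, -1 < x i := fun h i => by
    by_cases hi : (i : ℕ) = 0
    · exact (hxa i hi).1 h
    · exact hlo i hi
  have hup' : c < ((n : ℝ) + 1) / n → ∀ i, x i < 1 := fun h i => by
    by_cases hi : (i : ℕ) + 1 = n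
    · exact (hxb i hi).1 h
    · exact hup i hi
  refine ⟨x, hmono, ?_, ?_, fun h i => ⟨hlo' h.1 i, hup' h.2 i⟩, fun h => (hxa ⟨0, by omega⟩ rfl).2 h,
    fun h => (hxb ⟨n - 1, by omega⟩ (by simp only; omega)).2 h⟩
  · have hmon : (∏ i : Fin n, (X - C (x i))).Monic := monic_prod_X_sub_C _ _
    have hd : (∏ i : Fin n, (X - C (x i))).degree = (n : WithBot ℕ) := by
      rw [degree_prod]; simp
    have h2 : (2 : ℝ) ^ n ≠ 0 := by positivity
    apply Polynomial.eq_of_degree_sub_lt_of_eval_index_eq (s := Finset.univ) (v := x)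
      hmono.injective.injOn
    · rw [Finset.card_univ, Fintype.card_fin, ← degree_P n hn c, hR']
      apply degree_sub_lt
      · rw [degree_P n hn, degree_C_mul h2, hd]
      · intro h
        have := degree_P n hn c
        rw [h] at this
        simp at this
      · rw [lead_P n hn, leadingCoeff_mul, hmon.leadingCoeff]; simp
    · intro i _
      rw [hR', hx0, eval_mul, eval_prod, Finset.prod_eq_zero (Finset.mem_univ i) (by simp), mul_zero]
  · rw [Set.ncard_le_one (Set.toFinite _)]
    intro i hi j hj
    simp only [Set.mem_ofPred_eq, Set.mem_Ioo, not_and_or] at hi hj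
    by_cases h : c < ((n : ℝ) + 1) / n
    · have key : ∀ i : Fin n, (¬ -1 < x i ∨ ¬ x i < 1) → (i : ℕ) = 0 := fun i hi => by
        by_contra h3
        exact hi.elim (fun k => k (hlo i h3)) (fun k => k (hup' h i))
      exact Fin.ext (by rw [key i hi, key j hj])
    · have hpos : 0 < ((n : ℝ) + 1) / n := by positivity
      have hc' : -(((n : ℝ) + 1) / n) < c := by linarith [not_lt.mp h]
      have key : ∀ i : Fin n, (¬ -1 < x i ∨ ¬ x i < 1) → (i : ℕ) + 1 = n := fun i hi => by
        by_contra h3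
        exact hi.elim (fun k => k (hlo' hc' i)) (fun k => k (hup i h3))
      have := key i hi
      have := key j hj
      exact Fin.ext (by omega)
end

section
/- Let n ≥ 2 and let c be a nonzero real number, and set R(x) := V_n(x) − c·V_{n−1}(x), where V_k(x) := U_k(x) − U_{k−1}(x). Then: (i) all n complex zeros of R are real and simple, and at most one of them lies outside the open interval (−1, 1); (ii) if −(2n+1)/(2n−1) < c < 1, then all zeros of R lie in (−1, 1); (iii) if c < −(2n+1)/(2n−1), then the smallest zero of R is less than −1; (iv) if c > 1, then the largest zero of R is greater than 1. -/
open Polynomial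

/-- A real polynomial of degree at most `n` alternating in sign on an increasing grid of `n + 1`
points has `n` real simple zeros, one in each gap. -/
theorem factor_of_alternating (n : ℕ) (P : ℝ[X]) (hd : P.natDegree ≤ n) (p : ℕ → ℝ)
    (hp : ∀ i < n, p i < p (i + 1))
    (hs : ∀ i ≤ n, 0 < (-1 : ℝ) ^ (n + i) * P.eval (p i)) :
    ∃ x : Fin n → ℝ, StrictMono x ∧ P = C P.leadingCoeff * ∏ i : Fin n, (X - C (x i)) ∧
      ∀ i : Fin n, p i < x i ∧ x i < p (i + 1) := by
  have key : ∀ i : Fin n, ∃ z : ℝ, (p i < z ∧ z < p (i + 1)) ∧ P.eval z = 0 := by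
    intro i
    have h1 := hs i i.2.le
    have h2 := hs (i + 1) i.2
    have hcont : ContinuousOn (fun z => P.eval z) (Set.Icc (p i) (p (i + 1))) :=
      P.continuous.continuousOn
    rw [← add_assoc, pow_succ] at h2
    rcases neg_one_pow_eq_or ℝ (n + (i : ℕ)) with h | h
    · rw [h] at h1 h2
      obtain ⟨z, hz, hz0⟩ := intermediate_value_Ioo' (hp i i.2).le hcont
        (show (0 : ℝ) ∈ Set.Ioo _ _ from ⟨by linarith, by linarith⟩)
      exact ⟨z, hz, hz0⟩
    · rw [h] at h1 h2
      obtain ⟨z, hz, hz0⟩ := intermediate_value_Ioo (hp i i.2).le hcont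
        (show (0 : ℝ) ∈ Set.Ioo _ _ from ⟨by linarith, by linarith⟩)
      exact ⟨z, hz, hz0⟩
  choose x hx hx0 using key
  have hmono : ∀ i j : ℕ, i ≤ j → j ≤ n → p i ≤ p j := by
    intro i j hij
    induction j, hij using Nat.le_induction with
    | base => intro _; exact le_rfl
    | succ j _ ih => intro hj; exact (ih (by omega)).trans (hp j (by omega)).le
  have hsm : StrictMono x := by
    intro i j hij
    exact ((hx i).2.trans_le (hmono _ _ (Fin.lt_def.mp hij) j.2.le)).trans (hx j).1
  refine ⟨x, hsm, ?_, hx⟩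
  apply eq_leadingCoeff_mul_of_monic_of_dvd_of_natDegree_le
  · exact monic_prod_of_monic _ _ fun i _ => monic_X_sub_C _
  · refine Finset.prod_dvd_of_coprime ?_ ?_
    · intro i _ j _ hij
      exact pairwise_coprime_X_sub_C hsm.injective hij
    · intro i _
      exact dvd_iff_isRoot.mpr (hx0 i)
  · rw [natDegree_prod_of_monic _ _ fun i _ => monic_X_sub_C _]
    simpa using hd

/-- The quasi-orthogonal polynomial. -/
noncomputable def quasiR (n : ℕ) (c : ℝ) : ℝ[X] :=
  (Polynomial.Chebyshev.U ℝ n - Polynomial.Chebyshev.U ℝ ((n : ℤ) - 1))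
        - C c * (Polynomial.Chebyshev.U ℝ ((n : ℤ) - 1)
            - Polynomial.Chebyshev.U ℝ ((n : ℤ) - 2))

theorem leadU (n : ℕ) : (Polynomial.Chebyshev.U ℝ n).leadingCoeff = 2 ^ n := by
  simp

theorem quasiR_deg (n : ℕ) (hn : 2 ≤ n) (c : ℝ) :
    (quasiR n c).natDegree = n ∧ (quasiR n c).leadingCoeff = 2 ^ n := by
  obtain ⟨m, rfl⟩ := Nat.exists_eq_add_of_le' hn
  have e1 : ((m + 2 : ℕ) : ℤ) - 1 = ((m + 1 : ℕ) : ℤ) := by push_cast; ring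
  have e2 : ((m + 2 : ℕ) : ℤ) - 2 = (m : ℤ) := by push_cast; ring
  have hq : quasiR (m + 2) c = Polynomial.Chebyshev.U ℝ ((m + 2 : ℕ) : ℤ) -
      (Polynomial.Chebyshev.U ℝ ((m + 1 : ℕ) : ℤ) + C c *
        (Polynomial.Chebyshev.U ℝ ((m + 1 : ℕ) : ℤ) - Polynomial.Chebyshev.U ℝ (m : ℤ))) := by
    rw [quasiR, e1, e2]; ring
  have hlt : (Polynomial.Chebyshev.U ℝ ((m + 1 : ℕ) : ℤ) + C c *
        (Polynomial.Chebyshev.U ℝ ((m + 1 : ℕ) : ℤ) - Polynomial.Chebyshev.U ℝ (m : ℤ))).degree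
        < (Polynomial.Chebyshev.U ℝ ((m + 2 : ℕ) : ℤ)).degree := by
    have d1 := Polynomial.Chebyshev.degree_U_natCast ℝ (m + 1)
    have d0 := Polynomial.Chebyshev.degree_U_natCast ℝ m
    rw [Polynomial.Chebyshev.degree_U_natCast ℝ (m + 2)]
    have l1 : (Polynomial.Chebyshev.U ℝ ((m + 1 : ℕ) : ℤ)).degree < ((m + 2 : ℕ) : WithBot ℕ) := by
      rw [d1]; exact_mod_cast Nat.lt_succ_self _
    have l0 : (Polynomial.Chebyshev.U ℝ (m : ℤ)).degree < ((m + 2 : ℕ) : WithBot ℕ) := by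
      rw [d0]; exact_mod_cast (by omega : m < m + 2)
    refine (degree_add_le _ _).trans_lt (max_lt l1 ?_)
    rw [← smul_eq_C_mul]
    refine lt_of_le_of_lt (degree_smul_le _ _) ?_
    exact (degree_sub_le _ _).trans_lt (max_lt l1 l0)
  rw [hq]
  constructor
  · apply natDegree_eq_of_degree_eq_some
    rw [degree_sub_eq_left_of_degree_lt hlt, Polynomial.Chebyshev.degree_U_natCast]
  · rw [leadingCoeff_sub_of_degree_lt hlt, leadU]

theorem quasiR_one (n : ℕ) (c : ℝ) : (quasiR n c).eval 1 = 1 - c := by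
  simp [quasiR]; ring

theorem quasiR_neg_one (n : ℕ) (c : ℝ) :
    (-1) ^ n * (quasiR n c).eval (-1) = (2 * n + 1) + c * (2 * n - 1) := by
  have h : ((-1 : ℝ) ^ n) * (-1) ^ n = 1 := by rw [← mul_pow]; simp
  have e1 : (((n : ℤ) - 1).negOnePow : ℤ) = -(-1) ^ n := by
    rw [Int.negOnePow_sub]; simp [Int.negOnePow_def]
  have e2 : (((n : ℤ) - 2).negOnePow : ℤ) = (-1) ^ n := by
    rw [Int.negOnePow_sub]; simp [Int.negOnePow_def]
  have e0 : (((n : ℤ)).negOnePow : ℤ) = (-1) ^ n := by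
    simp [Int.negOnePow_def]
  simp only [quasiR, eval_sub, eval_mul, eval_C, Polynomial.Chebyshev.U_eval_neg_one, e0, e1, e2]
  push_cast
  linear_combination ((2 * n + 1) + c * (2 * n - 1) : ℝ) * h

theorem quasiR_cos (n i : ℕ) (hi : 1 ≤ i) (hin : i < n) (c θ : ℝ)
    (hθ : θ = (2 * ((n : ℝ) - i) - 1) * Real.pi / (2 * n - 1)) :
    0 < (-1 : ℝ) ^ (n + i) * (quasiR n c).eval (Real.cos θ) := by
  obtain ⟨m, rfl⟩ := Nat.exists_eq_add_of_lt hin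
  set k := m + 1 with hk
  have hk1 : (1 : ℝ) ≤ k := by rw [hk]; push_cast; linarith [(Nat.cast_nonneg m : (0 : ℝ) ≤ m)]
  have hi1 : (1 : ℝ) ≤ i := by exact_mod_cast hi
  have hN : i + m + 1 = i + k := by omega
  rw [hN] at hθ ⊢
  have hpi := Real.pi_pos
  push_cast at hθ
  have hden : (0 : ℝ) < 2 * (i + k) - 1 := by linarith
  have hθ0 : 0 < θ := by
    rw [hθ]; apply div_pos _ hden; apply mul_pos _ hpi; linarith
  have hθpi : θ < Real.pi := by
    rw [hθ, div_lt_iff₀ hden]; nlinarith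
  have hphi : (2 * ((i : ℝ) + k) - 1) * θ = 2 * (k * Real.pi - Real.pi / 2) := by
    rw [hθ]; field_simp; ring
  obtain ⟨φ, hφ⟩ : ∃ φ, φ = k * Real.pi - Real.pi / 2 := ⟨_, rfl⟩
  have hsφ : Real.sin φ = -(-1) ^ k := by
    rw [hφ, Real.sin_sub_pi_div_two, Real.cos_nat_mul_pi]
  have hcφ : Real.cos φ = 0 := by
    rw [hφ, Real.cos_sub_pi_div_two, Real.sin_nat_mul_pi]
  rw [← hφ] at hphi
  obtain ⟨h, hh⟩ : ∃ h, θ = 2 * h := ⟨θ / 2, by ring⟩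
  have hsin : 0 < Real.sin θ := Real.sin_pos_of_pos_of_lt_pi hθ0 hθpi
  have hsh : 0 < Real.sin h := Real.sin_pos_of_pos_of_lt_pi (by linarith) (by linarith)
  have u0 := Polynomial.Chebyshev.U_real_cos θ ((i + k : ℕ) : ℤ)
  have u1 := Polynomial.Chebyshev.U_real_cos θ (((i + k : ℕ) : ℤ) - 1)
  have u2 := Polynomial.Chebyshev.U_real_cos θ (((i + k : ℕ) : ℤ) - 2)
  have a0 : ((((i + k : ℕ) : ℤ) : ℝ) + 1) * θ = φ + 3 * h := by
    push_cast; linear_combination hphi / 2 + 3 / 2 * hh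
  have a1 : (((((i + k : ℕ) : ℤ) - 1 : ℤ) : ℝ) + 1) * θ = φ + h := by
    push_cast; linear_combination hphi / 2 + 1 / 2 * hh
  have a2 : (((((i + k : ℕ) : ℤ) - 2 : ℤ) : ℝ) + 1) * θ = φ - h := by
    push_cast; linear_combination hphi / 2 - 1 / 2 * hh
  rw [a0, Real.sin_add, hsφ, hcφ, Real.cos_three_mul] at u0
  rw [a1, Real.sin_add, hsφ, hcφ] at u1
  rw [a2, Real.sin_sub, hsφ, hcφ] at u2
  have hs2 : Real.sin θ = 2 * Real.sin h * Real.cos h := by rw [hh, Real.sin_two_mul]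
  have hsq := Real.sin_sq_add_cos_sq h
  have hkk : ((-1 : ℝ) ^ k) * (-1) ^ k = 1 := by rw [← mul_pow]; simp
  have hii : ((-1 : ℝ) ^ i) * (-1) ^ i = 1 := by rw [← mul_pow]; simp
  have main : (quasiR (i + k) c).eval (Real.cos θ) = (-1) ^ k * (2 * Real.sin h) := by
    apply mul_right_cancel₀ hsin.ne'
    simp only [quasiR, eval_sub, eval_mul, eval_C]
    linear_combination u0 - u1 - c * u1 + c * u2 - (-1) ^ k * (2 * Real.sin h) * hs2
      - 4 * (-1) ^ k * Real.cos h * hsq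
  have : (-1 : ℝ) ^ (i + k + i) * (quasiR (i + k) c).eval (Real.cos θ) = 2 * Real.sin h := by
    rw [main, pow_add, pow_add]
    linear_combination (2 * Real.sin h) * ((-1) ^ k * (-1) ^ k * hii + hkk)
  rw [this]; positivity

theorem exists_right (n : ℕ) (hn : 2 ≤ n) (c y : ℝ) (hy : y < 1) :
    ∃ b, y < b ∧ 0 < (quasiR n c).eval b ∧ (c < 1 → b ≤ 1) := by
  by_cases h : c < 1
  · exact ⟨1, hy, by rw [quasiR_one]; linarith, fun _ => le_rfl⟩
  · obtain ⟨h1, h2⟩ := quasiR_deg n hn c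
    have ht := (quasiR n c).tendsto_atTop_of_leadingCoeff_nonneg
      (natDegree_pos_iff_degree_pos.mp (by omega)) (by rw [h2]; positivity)
    obtain ⟨b, hb1, hb2⟩ := ((ht.eventually_gt_atTop 0).and (Filter.eventually_gt_atTop y)).exists
    exact ⟨b, hb2, hb1, fun h' => absurd h' h⟩

theorem exists_left (n : ℕ) (hn : 2 ≤ n) (c y : ℝ) (hy : -1 < y) :
    ∃ a, a < y ∧ 0 < (-1) ^ n * (quasiR n c).eval a ∧
      (-((2 * (n : ℝ) + 1) / (2 * (n : ℝ) - 1)) < c → -1 ≤ a) := by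
  by_cases h : -((2 * (n : ℝ) + 1) / (2 * (n : ℝ) - 1)) < c
  · refine ⟨-1, hy, ?_, fun _ => le_rfl⟩
    have hn2 : (2 : ℝ) ≤ n := by exact_mod_cast hn
    rw [quasiR_neg_one]
    rw [neg_lt, lt_div_iff₀ (by linarith)] at h
    linarith
  · obtain ⟨h1, h2⟩ := quasiR_deg n hn c
    have hd : (C ((-1) ^ n) * (quasiR n c).comp (-X)).natDegree = n := by
      rw [natDegree_C_mul (by simp), natDegree_comp, h1]; simp
    have hl : (C ((-1) ^ n) * (quasiR n c).comp (-X)).leadingCoeff = 2 ^ n := by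
      rw [leadingCoeff_mul, leadingCoeff_comp (by simp), h1, h2]
      simp only [leadingCoeff_C, leadingCoeff_neg, leadingCoeff_X]
      rw [mul_left_comm, ← mul_pow]; simp
    have ht := (C ((-1) ^ n) * (quasiR n c).comp (-X)).tendsto_atTop_of_leadingCoeff_nonneg
      (natDegree_pos_iff_degree_pos.mp (by omega)) (by rw [hl]; positivity)
    obtain ⟨b, hb1, hb2⟩ :=
      ((ht.eventually_gt_atTop 0).and (Filter.eventually_gt_atTop (-y))).exists
    refine ⟨-b, by linarith, ?_, fun h' => absurd h' h⟩
    simpa using hb1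

/-- Zeros of the third-kind Chebyshev quasi-orthogonal polynomial
`R = V_n - c V_{n-1}` of order one (`V_k = U_k - U_{k-1}`):  all `n` complex zeros are
real and simple, at most one lies outside `(-1,1)`; if `-(2n+1)/(2n-1) < c < 1` all zeros
lie in `(-1,1)`; if `c < -(2n+1)/(2n-1)` the smallest zero is `< -1`; if `c > 1` the
largest zero is `> 1`. -/
theorem chebyshevV_quasiOrthogonal_zeros (n : ℕ) (hn : 2 ≤ n) (c : ℝ) (hc : c ≠ 0)
    (R : Polynomial ℝ)
    (hR : R = (Polynomial.Chebyshev.U ℝ n - Polynomial.Chebyshev.U ℝ ((n : ℤ) - 1))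
        - C c * (Polynomial.Chebyshev.U ℝ ((n : ℤ) - 1)
            - Polynomial.Chebyshev.U ℝ ((n : ℤ) - 2))) :
    ∃ x : Fin n → ℝ, StrictMono x ∧
      R = C ((2 : ℝ) ^ n) * ∏ i : Fin n, (X - C (x i)) ∧
      Set.ncard {i : Fin n | x i ∉ Set.Ioo (-1 : ℝ) 1} ≤ 1 ∧
      ((-((2 * (n : ℝ) + 1) / (2 * (n : ℝ) - 1)) < c ∧ c < 1) →
        ∀ i, x i ∈ Set.Ioo (-1 : ℝ) 1) ∧
      (c < -((2 * (n : ℝ) + 1) / (2 * (n : ℝ) - 1)) → x ⟨0, by omega⟩ < -1) ∧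
      (1 < c → 1 < x ⟨n - 1, by omega⟩) := by
  have hR' : R = quasiR n c := hR
  have hn2 : (2 : ℝ) ≤ n := by exact_mod_cast hn
  have hden : (0 : ℝ) < 2 * n - 1 := by linarith
  have hpi := Real.pi_pos
  obtain ⟨hd, hl⟩ := quasiR_deg n hn c
  obtain ⟨t, ht⟩ : ∃ t : ℕ → ℝ, ∀ i, t i = (2 * ((n : ℝ) - i) - 1) * Real.pi / (2 * n - 1) :=
    ⟨_, fun _ => rfl⟩
  have ht0 : ∀ i < n, 0 < t i := by
    intro i hi
    have : (i : ℝ) + 1 ≤ n := by exact_mod_cast hi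
    rw [ht]; apply div_pos _ hden; apply mul_pos _ hpi; linarith
  have htpi : ∀ i, 1 ≤ i → t i < Real.pi := by
    intro i hi
    have : (1 : ℝ) ≤ i := by exact_mod_cast hi
    rw [ht, div_lt_iff₀ hden]; nlinarith
  have htlt : ∀ i, t (i + 1) < t i := by
    intro i
    rw [ht, ht]
    apply div_lt_div_of_pos_right _ hden
    apply mul_lt_mul_of_pos_right _ hpi
    push_cast; linarith
  have hcos : ∀ i, 1 ≤ i → i < n → -1 < Real.cos (t i) ∧ Real.cos (t i) < 1 := by
    intro i h1 h2
    constructor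
    · rw [← Real.cos_pi]
      exact Real.cos_lt_cos_of_nonneg_of_le_pi (ht0 i h2).le le_rfl (htpi i h1)
    · rw [← Real.cos_zero]
      exact Real.cos_lt_cos_of_nonneg_of_le_pi le_rfl (htpi i h1).le (ht0 i h2)
  obtain ⟨a, ha1, ha2, ha3⟩ := exists_left n hn c (Real.cos (t 1)) (hcos 1 le_rfl (by omega)).1
  obtain ⟨b, hb1, hb2, hb3⟩ := exists_right n hn c (Real.cos (t (n - 1)))
    (hcos (n - 1) (by omega) (by omega)).2
  obtain ⟨p, hp⟩ : ∃ p : ℕ → ℝ, ∀ i, p i = if i = 0 then a else if i = n then b else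
    Real.cos (t i) := ⟨_, fun _ => rfl⟩
  have hp0 : p 0 = a := by simp [hp]
  have hpn : p n = b := by rw [hp, if_neg (by omega), if_pos rfl]
  have hpi' : ∀ i, 1 ≤ i → i < n → p i = Real.cos (t i) := by
    intro i h1 h2
    rw [hp, if_neg (by omega), if_neg (by omega)]
  have hpmono : ∀ i < n, p i < p (i + 1) := by
    intro i hi
    by_cases h0 : i = 0
    · subst h0
      rw [hp0, hpi' (0 + 1) (by omega) (by omega)]; exact ha1
    · by_cases h1 : i + 1 = n
      · have : i = n - 1 := by omega
        rw [h1, hpn, hpi' i (by omega) hi, this]; exact hb1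
      · rw [hpi' i (by omega) hi, hpi' (i + 1) (by omega) (by omega)]
        exact Real.cos_lt_cos_of_nonneg_of_le_pi (ht0 (i + 1) (by omega)).le
          (htpi i (by omega)).le (htlt i)
  have hps : ∀ i ≤ n, 0 < (-1 : ℝ) ^ (n + i) * (quasiR n c).eval (p i) := by
    intro i hi
    by_cases h0 : i = 0
    · subst h0
      rw [hp0]; exact ha2
    · by_cases h1 : i = n
      · subst h1
        rw [hpn, ← two_mul, pow_mul]; simpa using hb2
      · rw [hpi' i (by omega) (by omega)]
        exact quasiR_cos n i (by omega) (by omega) c (t i) (ht i)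
  obtain ⟨x, hx, hfac, hxp⟩ := factor_of_alternating n (quasiR n c) hd.le p hpmono hps
  rw [hl] at hfac
  have hlow : ∀ i : Fin n, 1 ≤ (i : ℕ) → -1 < x i := by
    intro i hi
    have := (hxp i).1
    rw [hpi' i hi i.2] at this
    exact (hcos i hi i.2).1.trans this
  have hup : ∀ i : Fin n, (i : ℕ) + 1 < n → x i < 1 := by
    intro i hi
    have := (hxp i).2
    rw [hpi' (i + 1) (by omega) hi] at this
    exact this.trans (hcos (i + 1) (by omega) hi).2
  have hlow' : -((2 * (n : ℝ) + 1) / (2 * (n : ℝ) - 1)) < c → ∀ i : Fin n, -1 < x i := by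
    intro h i
    by_cases hi : 1 ≤ (i : ℕ)
    · exact hlow i hi
    · have h2 := (hxp i).1
      have h0 : (i : ℕ) = 0 := by omega
      rw [h0, hp0] at h2
      exact (ha3 h).trans_lt h2
  have hup' : c < 1 → ∀ i : Fin n, x i < 1 := by
    intro h i
    by_cases hi : (i : ℕ) + 1 < n
    · exact hup i hi
    · have h2 := (hxp i).2
      have h0 : (i : ℕ) + 1 = n := by omega
      rw [h0, hpn] at h2
      exact h2.trans_le (hb3 h)
  refine ⟨x, hx, hR'.trans hfac, ?_, ?_, ?_, ?_⟩
  · rw [Set.ncard_le_one]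
    intro i hi j hj
    simp only [Set.mem_ofPred_eq, Set.mem_Ioo, not_and_or] at hi hj
    by_cases h : c < 1
    · have e : ∀ k : Fin n, (¬ -1 < x k ∨ ¬ x k < 1) → (k : ℕ) = 0 := by
        intro k hk
        by_contra h0
        rcases hk with hk | hk
        · exact hk (hlow k (by omega))
        · exact hk (hup' h k)
      exact Fin.ext ((e i hi).trans (e j hj).symm)
    · have h' : -((2 * (n : ℝ) + 1) / (2 * (n : ℝ) - 1)) < c := by
        have : (0 : ℝ) < (2 * (n : ℝ) + 1) / (2 * (n : ℝ) - 1) := div_pos (by linarith) hden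
        linarith
      have e : ∀ k : Fin n, (¬ -1 < x k ∨ ¬ x k < 1) → (k : ℕ) + 1 = n := by
        intro k hk
        by_contra h0
        rcases hk with hk | hk
        · exact hk (hlow' h' k)
        · exact hk (hup k (by omega))
      exact Fin.ext (by have := e i hi; have := e j hj; omega)
  · rintro ⟨h1, h2⟩ i
    exact ⟨hlow' h1 i, hup' h2 i⟩
  · intro h
    by_contra! h0
    have hall : ∀ i, -1 ≤ x i := fun i =>
      h0.trans (hx.monotone (Fin.le_def.mpr (Nat.zero_le _)))
    have h1 := quasiR_neg_one n c
    rw [hfac] at h1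
    simp only [eval_mul, eval_C, eval_prod, eval_sub, eval_X] at h1
    have h2 : ∏ i : Fin n, (-1 - x i) = (-1) ^ n * ∏ i : Fin n, (1 + x i) := by
      have : ∀ i : Fin n, (-1 - x i) = (-1) * (1 + x i) := fun i => by ring
      simp only [this, Finset.prod_mul_distrib]
      simp
    have h3 : 0 ≤ ∏ i : Fin n, (1 + x i) :=
      Finset.prod_nonneg fun i _ => by linarith [hall i]
    have hnn : ((-1 : ℝ) ^ n) * (-1) ^ n = 1 := by rw [← mul_pow]; simp
    have h4 : (2 : ℝ) ^ n * ∏ i : Fin n, (1 + x i) = (2 * n + 1) + c * (2 * n - 1) := by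
      rw [← h1, h2]
      linear_combination (-(2 : ℝ) ^ n * ∏ i : Fin n, (1 + x i)) * hnn
    have h5 : (0 : ℝ) ≤ (2 : ℝ) ^ n * ∏ i : Fin n, (1 + x i) := by positivity
    rw [lt_neg, div_lt_iff₀ hden] at h
    linarith
  · intro h
    by_contra! h0
    have hall : ∀ i, x i ≤ 1 := fun i =>
      (hx.monotone (Fin.le_def.mpr (by have := i.2; simp only; omega))).trans h0
    have h1 := quasiR_one n c
    rw [hfac] at h1
    simp only [eval_mul, eval_C, eval_prod, eval_sub, eval_X] at h1
    have h3 : 0 ≤ ∏ i : Fin n, (1 - x i) :=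
      Finset.prod_nonneg fun i _ => by linarith [hall i]
    have h5 : (0 : ℝ) ≤ (2 : ℝ) ^ n * ∏ i : Fin n, (1 - x i) := by positivity
    linarith
end

section
/- Let n ≥ 2 and let c be a nonzero real number, and set R(x) := W_n(x) − c·W_{n−1}(x), where W_k(x) := U_k(x) + U_{k−1}(x). Then: (i) all n complex zeros of R are real and simple, and at most one of them lies outside the open interval (−1, 1); (ii) if −1 < c < (2n+1)/(2n−1), then all zeros of R lie in (−1, 1); (iii) if c < −1, then the smallest zero of R is less than −1; (iv) if c > (2n+1)/(2n−1), then the largest zero of R is greater than 1. -/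
open Polynomial

/-- Sign-change form of the intermediate value theorem for polynomials. -/
theorem chebW_ivt (R : Polynomial ℝ) (a b e : ℝ) (hab : a < b)
    (ha : 0 < e * R.eval a) (hb : 0 < -e * R.eval b) :
    ∃ z ∈ Set.Ioo a b, R.eval z = 0 := by
  have hcont : ContinuousOn (fun x => e * R.eval x) (Set.Icc a b) :=
    (continuous_const.mul R.continuous).continuousOn
  have h0 : (0 : ℝ) ∈ Set.Ioo (e * R.eval b) (e * R.eval a) := ⟨by linarith, ha⟩
  obtain ⟨z, hz, hz0⟩ := intermediate_value_Ioo' hab.le hcont h0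
  refine ⟨z, hz, ?_⟩
  have he : e ≠ 0 := by
    rintro rfl
    simp at ha
  simpa [he] using hz0

/-- A polynomial alternating in sign at `n+1` increasing nodes, with degree `n`. -/
theorem chebW_roots (n : ℕ) (R : Polynomial ℝ) (l : ℝ) (hl : l ≠ 0) (hdeg : R.natDegree = n)
    (hlead : R.leadingCoeff = l) (t : ℕ → ℝ) (ht : ∀ i < n, t i < t (i + 1))
    (hs : ∀ i ≤ n, 0 < (-1 : ℝ) ^ (n + i) * R.eval (t i)) :
    ∃ x : Fin n → ℝ, StrictMono x ∧ R = C l * ∏ i : Fin n, (X - C (x i)) ∧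
      ∀ i : Fin n, t i < x i ∧ x i < t (i + 1) := by
  have hex : ∀ i : Fin n, ∃ z ∈ Set.Ioo (t i) (t (i + 1)), R.eval z = 0 := by
    intro i
    apply chebW_ivt R _ _ ((-1 : ℝ) ^ (n + (i : ℕ))) (ht i i.2) (hs i i.2.le)
    have := hs (i + 1) i.2
    rw [← add_assoc, pow_succ] at this
    linarith
  choose x hx hx0 using hex
  have hmono : ∀ i j : ℕ, i ≤ j → j ≤ n → t i ≤ t j := by
    intro i j hij
    induction j, hij using Nat.le_induction with
    | base => intro _; exact le_rfl
    | succ k hk ih => intro h; exact (ih (by omega)).trans (ht k (by omega)).le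
  have hsm : StrictMono x := by
    intro i j hij
    have h1 := (hx i).2
    have h2 := (hx j).1
    have h3 := hmono (i + 1) j hij j.2.le
    linarith
  refine ⟨x, hsm, ?_, fun i => hx i⟩
  have hR0 : R ≠ 0 := by
    rintro rfl
    simp at hlead
    exact hl hlead.symm
  have hle : (Finset.univ.val.map x) ≤ R.roots := by
    rw [Multiset.le_iff_subset (Finset.univ.nodup.map hsm.injective)]
    intro z hz
    obtain ⟨i, -, rfl⟩ := Multiset.mem_map.1 hz
    exact (mem_roots hR0).2 (hx0 i)
  have heq : (Finset.univ.val.map x) = R.roots := by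
    apply Multiset.eq_of_le_of_card_le hle
    simpa [hdeg] using R.card_roots'
  have hcard : R.roots.card = R.natDegree := by
    rw [← heq, hdeg]; simp
  have := C_leadingCoeff_mul_prod_multiset_X_sub_C hcard
  rw [← heq, hlead, Multiset.map_map] at this
  exact this.symm

/-- The polynomial under study. -/
noncomputable def chebWR (n : ℕ) (c : ℝ) : Polynomial ℝ :=
  (Polynomial.Chebyshev.U ℝ n + Polynomial.Chebyshev.U ℝ ((n : ℤ) - 1))
        - C c * (Polynomial.Chebyshev.U ℝ ((n : ℤ) - 1)
            + Polynomial.Chebyshev.U ℝ ((n : ℤ) - 2))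

theorem chebWR_deg (n : ℕ) (hn : 2 ≤ n) (c : ℝ) :
    (chebWR n c).natDegree = n ∧ (chebWR n c).leadingCoeff = 2 ^ n := by
  obtain ⟨m, rfl⟩ : ∃ m, n = m + 2 := ⟨n - 2, by omega⟩
  have e : chebWR (m + 2) c = Chebyshev.U ℝ ((m + 2 : ℕ) : ℤ) +
      (Chebyshev.U ℝ ((m + 1 : ℕ) : ℤ) - C c * (Chebyshev.U ℝ ((m + 1 : ℕ) : ℤ)
        + Chebyshev.U ℝ (m : ℤ))) := by
    have h1 : ((m + 2 : ℕ) : ℤ) - 1 = ((m + 1 : ℕ) : ℤ) := by push_cast; ring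
    have h2 : ((m + 2 : ℕ) : ℤ) - 2 = (m : ℤ) := by push_cast; ring
    rw [chebWR, h1, h2]; ring
  have hd1 := Chebyshev.degree_U_natCast ℝ (m + 1)
  have hd0 := Chebyshev.degree_U_natCast ℝ m
  have hlt : (Chebyshev.U ℝ ((m + 1 : ℕ) : ℤ) - C c * (Chebyshev.U ℝ ((m + 1 : ℕ) : ℤ)
        + Chebyshev.U ℝ (m : ℤ))).degree < (Chebyshev.U ℝ ((m + 2 : ℕ) : ℤ)).degree := by
    rw [Chebyshev.degree_U_natCast]
    have hsum : (Chebyshev.U ℝ ((m + 1 : ℕ) : ℤ) + Chebyshev.U ℝ (m : ℤ)).degree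
        ≤ ((m + 1 : ℕ) : WithBot ℕ) := by
      refine (degree_add_le _ _).trans ?_
      rw [hd1, hd0]
      exact max_le le_rfl (by exact_mod_cast Nat.le_succ m)
    have hC : (C c * (Chebyshev.U ℝ ((m + 1 : ℕ) : ℤ) + Chebyshev.U ℝ (m : ℤ))).degree
        ≤ ((m + 1 : ℕ) : WithBot ℕ) := by
      rw [← smul_eq_C_mul]
      exact (degree_smul_le _ _).trans hsum
    refine lt_of_le_of_lt ((degree_sub_le _ _).trans (max_le hd1.le hC)) ?_
    exact_mod_cast Nat.lt_succ_self (m + 1)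
  rw [e]
  refine ⟨?_, ?_⟩
  · rw [natDegree_add_eq_left_of_degree_lt hlt, Chebyshev.natDegree_U_natCast]
  · rw [leadingCoeff_add_of_degree_lt' hlt, Chebyshev.leadingCoeff_U_natCast]

theorem chebWR_big (R : Polynomial ℝ) (hd : 0 < R.natDegree) (hl : 0 < R.leadingCoeff) :
    ∃ B : ℝ, 1 < B ∧ 0 < R.eval B := by
  have h := R.tendsto_atTop_of_leadingCoeff_nonneg (natDegree_pos_iff_degree_pos.1 hd) hl.le
  obtain ⟨B, h1, h2⟩ := ((h.eventually_gt_atTop 0).and (Filter.eventually_gt_atTop 1)).exists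
  exact ⟨B, h2, h1⟩

theorem chebWR_small (R : Polynomial ℝ) (hd : 0 < R.natDegree) (hl : 0 < R.leadingCoeff) :
    ∃ A : ℝ, A < -1 ∧ 0 < (-1 : ℝ) ^ R.natDegree * R.eval A := by
  have hnd : (C ((-1 : ℝ) ^ R.natDegree) * R.comp (-X)).natDegree = R.natDegree := by
    rw [natDegree_C_mul (by simp), natDegree_comp]; simp
  obtain ⟨B, hB, hB'⟩ := chebWR_big (C ((-1 : ℝ) ^ R.natDegree) * R.comp (-X))
    (by rwa [hnd]) (by
      rw [leadingCoeff_mul, leadingCoeff_comp (by simp)]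
      simp only [leadingCoeff_C, leadingCoeff_neg, leadingCoeff_X]
      rw [mul_comm, mul_assoc, ← mul_pow]
      simpa using hl)
  refine ⟨-B, by linarith, ?_⟩
  simpa using hB'

theorem chebWR_one (n : ℕ) (c : ℝ) :
    (chebWR n c).eval 1 = (2 * n + 1) - c * (2 * n - 1) := by
  simp [chebWR]
  ring

theorem chebWR_neg_one (n : ℕ) (c : ℝ) :
    (-1 : ℝ) ^ n * (chebWR n c).eval (-1) = 1 + c := by
  have h2 : ((-1 : ℝ) ^ n) * (-1 : ℝ) ^ n = 1 := by rw [← mul_pow]; simp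
  have v0 := Chebyshev.U_eval_neg_one ℝ (n : ℤ)
  have v1 := Chebyshev.U_eval_neg_one ℝ ((n : ℤ) - 1)
  have v2 := Chebyshev.U_eval_neg_one ℝ ((n : ℤ) - 2)
  have p0 : (((n : ℤ).negOnePow : ℤ) : ℝ) = (-1 : ℝ) ^ n := by simp
  have p1 : ((((n : ℤ) - 1).negOnePow : ℤ) : ℝ) = -(-1 : ℝ) ^ n := by
    rw [Int.negOnePow_sub]; simp
  have p2 : ((((n : ℤ) - 2).negOnePow : ℤ) : ℝ) = (-1 : ℝ) ^ n := by
    rw [Int.negOnePow_sub, Int.negOnePow_even 2 (by decide), mul_one]; simp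
  rw [p0] at v0
  rw [p1] at v1
  rw [p2] at v2
  push_cast at v0 v1 v2
  simp only [chebWR, eval_sub, eval_add, eval_mul, eval_C]
  rw [v0, v1, v2]
  linear_combination (1 + c) * h2

theorem chebWR_node (n j : ℕ) (hj : 1 ≤ j) (hjn : j < n) (c : ℝ) :
    0 < (-1 : ℝ) ^ j * (chebWR n c).eval (Real.cos (2 * Real.pi * j / (2 * n - 1))) := by
  have hjR : (1 : ℝ) ≤ j := by exact_mod_cast hj
  have hjnR : (j : ℝ) + 1 ≤ n := by exact_mod_cast hjn
  have hpi := Real.pi_pos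
  have hden : (0 : ℝ) < 2 * n - 1 := by linarith
  set θ : ℝ := 2 * Real.pi * j / (2 * n - 1) with hθ
  have hθ' : (n - 1 / 2) * θ = j * Real.pi := by
    have := hden.ne'
    rw [hθ, mul_div_assoc', div_eq_iff this]; ring
  have h0 : 0 < θ := by positivity
  have h1 : θ < Real.pi := by
    rw [hθ, div_lt_iff₀ hden]; nlinarith
  have hsin : 0 < Real.sin θ := Real.sin_pos_of_pos_of_lt_pi h0 h1
  have hcos : 0 < Real.cos (θ / 2) := Real.cos_pos_of_mem_Ioo ⟨by linarith, by linarith⟩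
  have hs0 : Real.sin ((n - 1 / 2) * θ) = 0 := by rw [hθ', Real.sin_nat_mul_pi]
  have hc0 : Real.cos ((n - 1 / 2) * θ) = (-1) ^ j := by rw [hθ', Real.cos_nat_mul_pi]
  have u0 := Chebyshev.U_real_cos θ (n : ℤ)
  have u1 := Chebyshev.U_real_cos θ ((n : ℤ) - 1)
  have u2 := Chebyshev.U_real_cos θ ((n : ℤ) - 2)
  have a0 : (((n : ℤ) : ℝ) + 1) * θ = (n - 1 / 2) * θ + (θ + θ / 2) := by push_cast; ring
  have a1 : ((((n : ℤ) - 1 : ℤ) : ℝ) + 1) * θ = (n - 1 / 2) * θ + θ / 2 := by push_cast; ring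
  have a2 : ((((n : ℤ) - 2 : ℤ) : ℝ) + 1) * θ = (n - 1 / 2) * θ - θ / 2 := by push_cast; ring
  rw [a0, Real.sin_add, hs0, hc0, Real.sin_add] at u0
  rw [a1, Real.sin_add, hs0, hc0] at u1
  rw [a2, Real.sin_sub, hs0, hc0] at u2
  have hdbl : Real.sin θ = 2 * Real.sin (θ / 2) * Real.cos (θ / 2) := by
    rw [← Real.sin_two_mul]; congr 1; ring
  have hdblc : Real.cos θ = 2 * Real.cos (θ / 2) ^ 2 - 1 := by
    rw [← Real.cos_two_mul]; congr 1; ring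
  have key : (chebWR n c).eval (Real.cos θ) * Real.sin θ
      = (-1) ^ j * (2 * Real.cos (θ / 2)) * Real.sin θ := by
    simp only [chebWR, eval_sub, eval_add, eval_mul, eval_C]
    have : Real.sin θ * Real.cos (θ / 2) + Real.cos θ * Real.sin (θ / 2) + Real.sin (θ / 2)
        = 2 * Real.cos (θ / 2) * Real.sin θ := by
      rw [hdbl, hdblc]; ring
    linear_combination u0 + u1 - c * (u1 + u2) + (-1) ^ j * this
  have key2 := mul_right_cancel₀ hsin.ne' key
  rw [key2, ← mul_assoc, ← mul_pow]
  simpa using hcos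

theorem chebyshevW_quasiOrthogonal_zeros (n : ℕ) (hn : 2 ≤ n) (c : ℝ) (hc : c ≠ 0)
    (R : Polynomial ℝ)
    (hR : R = (Polynomial.Chebyshev.U ℝ n + Polynomial.Chebyshev.U ℝ ((n : ℤ) - 1))
        - C c * (Polynomial.Chebyshev.U ℝ ((n : ℤ) - 1)
            + Polynomial.Chebyshev.U ℝ ((n : ℤ) - 2))) :
    ∃ x : Fin n → ℝ, StrictMono x ∧
      R = C ((2 : ℝ) ^ n) * ∏ i : Fin n, (X - C (x i)) ∧
      Set.ncard {i : Fin n | x i ∉ Set.Ioo (-1 : ℝ) 1} ≤ 1 ∧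
      ((-1 < c ∧ c < (2 * (n : ℝ) + 1) / (2 * (n : ℝ) - 1)) →
        ∀ i, x i ∈ Set.Ioo (-1 : ℝ) 1) ∧
      (c < -1 → x ⟨0, by omega⟩ < -1) ∧
      ((2 * (n : ℝ) + 1) / (2 * (n : ℝ) - 1) < c → 1 < x ⟨n - 1, by omega⟩) := by
  have hR' : R = chebWR n c := hR
  clear hR
  have hnR : (2 : ℝ) ≤ n := by exact_mod_cast hn
  have hden : (0 : ℝ) < 2 * n - 1 := by linarith
  have hpi := Real.pi_pos
  obtain ⟨hdeg, hlead⟩ := chebWR_deg n hn c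
  rw [← hR'] at hdeg hlead
  have hlpos : 0 < R.leadingCoeff := by rw [hlead]; positivity
  obtain ⟨B, hB1, hB⟩ := chebWR_big R (by omega) hlpos
  obtain ⟨A, hA1, hA⟩ := chebWR_small R (by omega) hlpos
  rw [hdeg] at hA
  have hone := chebWR_one n c
  have hneg := chebWR_neg_one n c
  rw [← hR'] at hone hneg
  set r : ℝ := (2 * (n : ℝ) + 1) / (2 * (n : ℝ) - 1) with hr
  have hr1 : 1 < r := by rw [hr, lt_div_iff₀ hden]; linarith
  have hrc : ∀ d : ℝ, d < r ↔ d * (2 * n - 1) < 2 * n + 1 := fun d => lt_div_iff₀ hden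
  have hrc' : ∀ d : ℝ, r < d ↔ 2 * n + 1 < d * (2 * n - 1) := fun d => div_lt_iff₀ hden
  -- interior nodes
  let m : ℕ → ℝ := fun i => Real.cos (2 * Real.pi * ((n - i : ℕ) : ℝ) / (2 * n - 1))
  have hang : ∀ i : ℕ, 1 ≤ i → i < n →
      0 < 2 * Real.pi * ((n - i : ℕ) : ℝ) / (2 * n - 1) ∧
      2 * Real.pi * ((n - i : ℕ) : ℝ) / (2 * n - 1) < Real.pi := by
    intro i h1 h2
    have e1 : (1 : ℝ) ≤ ((n - i : ℕ) : ℝ) := by exact_mod_cast (by omega : 1 ≤ n - i)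
    have e2 : ((n - i : ℕ) : ℝ) + 1 ≤ n := by exact_mod_cast (by omega : n - i + 1 ≤ n)
    constructor
    · positivity
    · rw [div_lt_iff₀ hden]; nlinarith
  have hm_mem : ∀ i : ℕ, 1 ≤ i → i < n → -1 < m i ∧ m i < 1 := by
    intro i h1 h2
    obtain ⟨e1, e2⟩ := hang i h1 h2
    constructor
    · have := Real.cos_lt_cos_of_nonneg_of_le_pi e1.le le_rfl e2
      rwa [Real.cos_pi] at this
    · have := Real.cos_lt_cos_of_nonneg_of_le_pi le_rfl e2.le e1
      rwa [Real.cos_zero] at this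
  have hm_lt : ∀ i : ℕ, 1 ≤ i → i + 1 < n → m i < m (i + 1) := by
    intro i h1 h2
    obtain ⟨e1, e2⟩ := hang i h1 (by omega)
    obtain ⟨e3, e4⟩ := hang (i + 1) (by omega) h2
    apply Real.cos_lt_cos_of_nonneg_of_le_pi e3.le e2.le
    have : ((n - (i + 1) : ℕ) : ℝ) < ((n - i : ℕ) : ℝ) := by
      exact_mod_cast (by omega : n - (i + 1) < n - i)
    gcongr
  have hm_sgn : ∀ i : ℕ, 1 ≤ i → i < n → 0 < (-1 : ℝ) ^ (n + i) * R.eval (m i) := by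
    intro i h1 h2
    have := chebWR_node n (n - i) (by omega) (by omega) c
    rw [← hR'] at this
    have e : (-1 : ℝ) ^ (n + i) = (-1) ^ (n - i) := by
      rw [show n + i = (n - i) + 2 * i by omega, pow_add, pow_mul]; simp
    rw [e]; exact this
  -- end nodes
  obtain ⟨AA, hAA1, hAAc, hAAs⟩ : ∃ AA : ℝ, AA ≤ -1 ∧ (-1 < c → AA = -1) ∧
      0 < (-1 : ℝ) ^ n * R.eval AA := by
    by_cases h : -1 < c
    · exact ⟨-1, le_rfl, fun _ => rfl, by rw [hneg]; linarith⟩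
    · exact ⟨A, hA1.le, fun h' => absurd h' h, hA⟩
  obtain ⟨BB, hBB1, hBBc, hBBs⟩ : ∃ BB : ℝ, 1 ≤ BB ∧ (c < r → BB = 1) ∧
      0 < R.eval BB := by
    by_cases h : c < r
    · exact ⟨1, le_rfl, fun _ => rfl, by rw [hone]; linarith [(hrc c).1 h]⟩
    · exact ⟨B, hB1.le, fun h' => absurd h' h, hB⟩
  let t : ℕ → ℝ := fun i => if i = 0 then AA else if i = n then BB else m i
  have t0 : t 0 = AA := by simp [t]
  have tn : t n = BB := by
    have : n ≠ 0 := by omega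
    simp [t, this]
  have tm : ∀ i, 1 ≤ i → i < n → t i = m i := by
    intro i h1 h2
    have q1 : i ≠ 0 := by omega
    have q2 : i ≠ n := by omega
    simp [t, q1, q2]
  have ht : ∀ i < n, t i < t (i + 1) := by
    intro i hi
    rcases Nat.eq_zero_or_pos i with rfl | hpos
    · rw [t0, tm (0 + 1) (by omega) (by omega)]
      linarith [(hm_mem (0 + 1) (by omega) (by omega)).1]
    · rw [tm i hpos hi]
      by_cases h : i + 1 = n
      · rw [h, tn]; linarith [(hm_mem i hpos hi).2]
      · rw [tm (i + 1) (by omega) (by omega)]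
        exact hm_lt i hpos (by omega)
  have hs : ∀ i ≤ n, 0 < (-1 : ℝ) ^ (n + i) * R.eval (t i) := by
    intro i hi
    rcases Nat.eq_zero_or_pos i with rfl | hpos
    · rw [t0]; exact hAAs
    · by_cases h : i = n
      · rw [h, tn, ← two_mul, pow_mul]; simpa using hBBs
      · rw [tm i hpos (by omega)]
        exact hm_sgn i hpos (by omega)
  obtain ⟨x, hx, hprod, hxt⟩ := chebW_roots n R (2 ^ n) (by positivity) hdeg hlead t ht hs
  have hroot : ∀ z, R.eval z = 0 → ∃ i, x i = z := by
    intro z hz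
    rw [hprod, eval_mul, eval_C, eval_prod] at hz
    have h2 : (2 : ℝ) ^ n ≠ 0 := by positivity
    obtain ⟨i, -, hi⟩ := Finset.prod_eq_zero_iff.1 ((mul_eq_zero.1 hz).resolve_left h2)
    refine ⟨i, ?_⟩
    simp at hi
    linarith
  have hlow : ∀ i : Fin n, (-1 < c ∨ (i : ℕ) ≠ 0) → -1 < x i := by
    intro i hi
    have h := (hxt i).1
    by_cases h0 : (i : ℕ) = 0
    · rw [h0, t0, hAAc (hi.resolve_right (by simpa using h0))] at h
      exact h
    · rw [tm i (by omega) i.2] at h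
      linarith [(hm_mem i (by omega) i.2).1]
  have hupp : ∀ i : Fin n, (c < r ∨ (i : ℕ) + 1 ≠ n) → x i < 1 := by
    intro i hi
    have h := (hxt i).2
    by_cases h0 : (i : ℕ) + 1 = n
    · rw [h0, tn, hBBc (hi.resolve_right (by simpa using h0))] at h
      exact h
    · have := i.2
      rw [tm _ (by omega) (by omega)] at h
      linarith [(hm_mem (i + 1) (by omega) (by omega)).2]
  refine ⟨x, hx, hprod, ?_, ?_, ?_, ?_⟩
  · rw [Set.ncard_le_one_iff]
    intro a b ha hb
    simp only [Set.mem_ofPred_eq, Set.mem_Ioo, not_and_or] at ha hb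
    by_cases h : -1 < c
    · have aux : ∀ i : Fin n, (¬ -1 < x i ∨ ¬ x i < 1) → (i : ℕ) + 1 = n := by
        intro i hi
        by_contra h'
        rcases hi with hi | hi
        · exact hi (hlow i (Or.inl h))
        · exact hi (hupp i (Or.inr h'))
      have := aux a ha
      have := aux b hb
      ext; omega
    · have aux : ∀ i : Fin n, (¬ -1 < x i ∨ ¬ x i < 1) → (i : ℕ) = 0 := by
        intro i hi
        by_contra h'
        rcases hi with hi | hi
        · exact hi (hlow i (Or.inr h'))
        · exact hi (hupp i (Or.inl (by linarith)))
      have := aux a ha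
      have := aux b hb
      ext; omega
  · rintro ⟨h1, h2⟩ i
    exact ⟨hlow i (Or.inl h1), hupp i (Or.inl h2)⟩
  · intro h
    obtain ⟨z, hz, hz0⟩ := chebW_ivt R A (-1) ((-1) ^ n) hA1 hA (by linarith)
    obtain ⟨i, rfl⟩ := hroot z hz0
    exact lt_of_le_of_lt (hx.monotone (by rw [Fin.le_def]; simp)) hz.2
  · intro h
    obtain ⟨z, hz, hz0⟩ := chebW_ivt R 1 B (-1) hB1
      (by rw [hone]; linarith [(hrc' c).1 h]) (by simpa using hB)
    obtain ⟨i, rfl⟩ := hroot z hz0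
    exact lt_of_lt_of_le hz.1 (hx.monotone (by rw [Fin.le_def]; simp; omega))
end

section
/- Let n ≥ 2 and let c be a nonzero real number, and let x_1 < x_2 < … < x_n be the (real, simple) zeros of R(x) := T_n(x) − c·T_{n−1}(x). Let t_1 < … < t_n denote the zeros of T_n and s_1 < … < s_{n−1} denote the zeros of T_{n−1}. If c > 0, then t_i < x_i < s_i for i = 1, …, n−1 and t_n < x_n; if c < 0, then x_1 < t_1 and s_{i−1} < x_i < t_i for i = 2, …, n. -/
open Polynomial

lemma aux_sigma (n : ℕ) (σ : ℕ → ℕ) (h1 : ∀ i, i < n → σ i < n)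
    (h2 : ∀ i, i + 1 < n → σ i < σ (i + 1)) : ∀ i, i < n → σ i = i := by
  have lo : ∀ i, i < n → i ≤ σ i := by
    intro i
    induction i with
    | zero => intro _; omega
    | succ k ih =>
      intro hk
      have := ih (by omega)
      have := h2 k hk
      omega
  have hi : ∀ d i, i + d + 1 = n → σ i ≤ i := by
    intro d
    induction d with
    | zero =>
      intro i hi
      have := h1 i (by omega)
      omega
    | succ k ih =>
      intro i hi
      have := ih (i + 1) (by omega)
      have := h2 i (by omega)
      omega
  intro i hin
  have := lo i hin
  have := hi (n - 1 - i) i (by omega)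
  omega

lemma aux_T_t (n i k : ℕ) (h : n = i + k + 1) :
    ∃ p : ℝ, 0 < p ∧ (Chebyshev.T ℝ n).eval
        (Real.cos (((2 * (n - i) - 1 : ℕ) : ℝ) * Real.pi / (2 * n))) = 0 ∧
      (Chebyshev.T ℝ ((n : ℤ) - 1)).eval
        (Real.cos (((2 * (n - i) - 1 : ℕ) : ℝ) * Real.pi / (2 * n))) = (-1) ^ k * p := by
  have e : ((2 * (n - i) - 1 : ℕ) : ℝ) = 2 * k + 1 := by
    have : 2 * (n - i) - 1 = 2 * k + 1 := by omega
    rw [this]; push_cast; ring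
  rw [e]
  have hn0 : (0 : ℝ) < n := by exact_mod_cast (by omega : 0 < n)
  have hkn : (k : ℝ) + 1 ≤ n := by exact_mod_cast (by omega : k + 1 ≤ n)
  set θ := (2 * (k : ℝ) + 1) * Real.pi / (2 * n) with hθ
  have hnθ : (n : ℝ) * θ = k * Real.pi + Real.pi / 2 := by
    rw [hθ]; field_simp
  refine ⟨Real.sin θ, ?_, ?_, ?_⟩
  · apply Real.sin_pos_of_pos_of_lt_pi
    · have := Real.pi_pos
      positivity
    · rw [hθ, div_lt_iff₀ (by positivity)]
      nlinarith [Real.pi_pos]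
  · rw [Chebyshev.T_real_cos]
    push_cast
    rw [hnθ, Real.cos_add_pi_div_two, Real.sin_nat_mul_pi, neg_zero]
  · rw [Chebyshev.T_real_cos]
    push_cast
    rw [sub_mul, one_mul, Real.cos_sub, hnθ, Real.cos_add_pi_div_two, Real.sin_nat_mul_pi,
      Real.sin_add_pi_div_two, Real.cos_nat_mul_pi]
    ring

lemma aux_T_s (n i k : ℕ) (h : n = i + k + 2) :
    ∃ p : ℝ, 0 < p ∧ (Chebyshev.T ℝ ((n : ℤ) - 1)).eval
        (Real.cos (((2 * (n - 1 - i) - 1 : ℕ) : ℝ) * Real.pi / (2 * (n - 1)))) = 0 ∧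
      (Chebyshev.T ℝ n).eval
        (Real.cos (((2 * (n - 1 - i) - 1 : ℕ) : ℝ) * Real.pi / (2 * (n - 1)))) =
          (-1) ^ (k + 1) * p := by
  have e : ((2 * (n - 1 - i) - 1 : ℕ) : ℝ) = 2 * k + 1 := by
    have : 2 * (n - 1 - i) - 1 = 2 * k + 1 := by omega
    rw [this]; push_cast; ring
  rw [e]
  have hkn : (k : ℝ) + 2 ≤ n := by exact_mod_cast (by omega : k + 2 ≤ n)
  have hn0 : (0 : ℝ) < (n : ℝ) - 1 := by
    have : (0 : ℝ) ≤ k := by positivity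
    linarith
  set θ := (2 * (k : ℝ) + 1) * Real.pi / (2 * (n - 1)) with hθ
  have hnθ : ((n : ℝ) - 1) * θ = k * Real.pi + Real.pi / 2 := by
    rw [hθ]; field_simp
  refine ⟨Real.sin θ, ?_, ?_, ?_⟩
  · apply Real.sin_pos_of_pos_of_lt_pi
    · have := Real.pi_pos
      positivity
    · rw [hθ, div_lt_iff₀ (by positivity)]
      nlinarith [Real.pi_pos]
  · rw [Chebyshev.T_real_cos]
    push_cast
    rw [hnθ, Real.cos_add_pi_div_two, Real.sin_nat_mul_pi, neg_zero]
  · rw [Chebyshev.T_real_cos]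
    push_cast
    have e2 : (n : ℝ) * θ = (k * Real.pi + Real.pi / 2) + θ := by rw [← hnθ]; ring
    rw [e2, Real.cos_add, Real.cos_add_pi_div_two, Real.sin_nat_mul_pi,
      Real.sin_add_pi_div_two, Real.cos_nat_mul_pi]
    ring

lemma aux_order_ts (n i : ℕ) (h : i + 2 ≤ n) :
    Real.cos (((2 * (n - i) - 1 : ℕ) : ℝ) * Real.pi / (2 * n)) <
    Real.cos (((2 * (n - 1 - i) - 1 : ℕ) : ℝ) * Real.pi / (2 * (n - 1))) := by
  obtain ⟨k, rfl⟩ : ∃ k, n = i + k + 2 := ⟨n - i - 2, by omega⟩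
  have e1 : 2 * (i + k + 2 - i) - 1 = 2 * k + 3 := by omega
  have e2 : 2 * (i + k + 2 - 1 - i) - 1 = 2 * k + 1 := by omega
  rw [e1, e2]
  push_cast
  have e3 : (i : ℝ) + k + 2 - 1 = i + k + 1 := by ring
  rw [e3]
  have := Real.pi_pos
  apply Real.cos_lt_cos_of_nonneg_of_le_pi
  · positivity
  · rw [div_le_iff₀ (by positivity)]
    have : 0 ≤ Real.pi * i := by positivity
    have : 0 ≤ Real.pi * k := by positivity
    nlinarith
  · rw [div_lt_div_iff₀ (by positivity) (by positivity)]
    have : 0 ≤ Real.pi * i := by positivity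
    nlinarith

lemma aux_order_st (n i : ℕ) (h : i + 2 ≤ n) :
    Real.cos (((2 * (n - 1 - i) - 1 : ℕ) : ℝ) * Real.pi / (2 * (n - 1))) <
    Real.cos (((2 * (n - (i + 1)) - 1 : ℕ) : ℝ) * Real.pi / (2 * n)) := by
  obtain ⟨k, rfl⟩ : ∃ k, n = i + k + 2 := ⟨n - i - 2, by omega⟩
  have e1 : 2 * (i + k + 2 - (i + 1)) - 1 = 2 * k + 1 := by omega
  have e2 : 2 * (i + k + 2 - 1 - i) - 1 = 2 * k + 1 := by omega
  rw [e1, e2]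
  push_cast
  have e3 : (i : ℝ) + k + 2 - 1 = i + k + 1 := by ring
  rw [e3]
  have := Real.pi_pos
  apply Real.cos_lt_cos_of_nonneg_of_le_pi
  · positivity
  · rw [div_le_iff₀ (by positivity)]
    have : 0 ≤ Real.pi * i := by positivity
    have : 0 ≤ Real.pi * k := by positivity
    nlinarith
  · apply div_lt_div_of_pos_left (by positivity) (by positivity)
    linarith

lemma aux_mid (n : ℕ) (x : ℕ → ℝ) (a b : ℝ) (hab : a < b)
    (h : (∏ i ∈ Finset.range n, (a - x i)) * (∏ i ∈ Finset.range n, (b - x i)) < 0) :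
    ∃ j, j < n ∧ a < x j ∧ x j < b := by
  by_contra! hcon
  rw [← Finset.prod_mul_distrib] at h
  refine absurd h (not_lt.mpr (Finset.prod_nonneg fun j hj => ?_))
  rcases le_or_gt (x j) a with h1 | h1
  · exact mul_nonneg (by linarith) (by linarith)
  · have := hcon j (Finset.mem_range.mp hj) h1
    exact mul_nonneg_of_nonpos_of_nonpos (by linarith) (by linarith)

lemma aux_top (n : ℕ) (x : ℕ → ℝ) (a : ℝ)
    (h : (∏ i ∈ Finset.range n, (a - x i)) < 0) : ∃ j, j < n ∧ a < x j := by
  by_contra! hcon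
  refine absurd h (not_lt.mpr (Finset.prod_nonneg fun j hj => ?_))
  have := hcon j (Finset.mem_range.mp hj)
  linarith

lemma aux_bot (n : ℕ) (x : ℕ → ℝ) (a : ℝ)
    (h : (-1) ^ n * (∏ i ∈ Finset.range n, (a - x i)) < 0) : ∃ j, j < n ∧ x j < a := by
  by_contra! hcon
  have e : (-1) ^ n * (∏ i ∈ Finset.range n, (a - x i)) =
      ∏ i ∈ Finset.range n, (x i - a) := by
    have : ∀ i ∈ Finset.range n, x i - a = (-1) * (a - x i) := fun i _ => by ring
    rw [Finset.prod_congr rfl this, Finset.prod_mul_distrib]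
    simp
  rw [e] at h
  refine absurd h (not_lt.mpr (Finset.prod_nonneg fun j hj => ?_))
  have := hcon j (Finset.mem_range.mp hj)
  linarith

/-- Interlacing of the zeros `x 0 < x 1 < … < x (n-1)` of `R = T_n - c T_{n-1}` with the
zeros `t` of `T_n` and the zeros `s` of `T_{n-1}` (all listed in increasing order):
if `c > 0` then `t i < x i < s i` for `i = 0, …, n-2` and `t (n-1) < x (n-1)`;
if `c < 0` then `x 0 < t 0` and `s (i-1) < x i < t i` for `i = 1, …, n-1`. -/
theorem chebyshevT_quasiOrthogonal_interlacing (n : ℕ) (hn : 2 ≤ n) (c : ℝ) (hc : c ≠ 0)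
    (R : Polynomial ℝ)
    (hR : R = Polynomial.Chebyshev.T ℝ n - C c * Polynomial.Chebyshev.T ℝ ((n : ℤ) - 1))
    (x : ℕ → ℝ) (hmono : ∀ i j, i < j → j < n → x i < x j)
    (hx : R = C ((2 : ℝ) ^ (n - 1)) * ∏ i ∈ Finset.range n, (X - C (x i)))
    (t s : ℕ → ℝ)
    (ht : ∀ i, t i = Real.cos (((2 * (n - i) - 1 : ℕ) : ℝ) * Real.pi / (2 * n)))
    (hs : ∀ i, s i = Real.cos (((2 * (n - 1 - i) - 1 : ℕ) : ℝ) * Real.pi / (2 * (n - 1)))) :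
    (0 < c → (∀ i, i < n - 1 → t i < x i ∧ x i < s i) ∧ t (n - 1) < x (n - 1)) ∧
    (c < 0 → x 0 < t 0 ∧ ∀ i, 1 ≤ i → i < n → s (i - 1) < x i ∧ x i < t i) := by
  have hts : ∀ i, i + 2 ≤ n → t i < s i := fun i hi => by
    rw [ht, hs]; exact aux_order_ts n i hi
  have hst : ∀ i, i + 2 ≤ n → s i < t (i + 1) := fun i hi => by
    rw [ht, hs]; exact aux_order_st n i hi
  set P : ℝ → ℝ := fun y => ∏ i ∈ Finset.range n, (y - x i) with hP
  have hReval : ∀ y, R.eval y = 2 ^ (n - 1) * P y := by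
    intro y
    rw [hx, hP]
    simp [eval_prod]
  have h2 : (0 : ℝ) < 2 ^ (n - 1) := by positivity
  have hPt : ∀ i k, n = i + k + 1 → ∃ p : ℝ, 0 < p ∧ P (t i) = -c * ((-1) ^ k * p) := by
    intro i k h
    obtain ⟨p, hp, h0, h1⟩ := aux_T_t n i k h
    rw [← ht] at h0 h1
    refine ⟨p / 2 ^ (n - 1), by positivity, ?_⟩
    have := hReval (t i)
    rw [hR, eval_sub, eval_mul, eval_C, h0, h1] at this
    field_simp
    linarith
  have hPs : ∀ i k, n = i + k + 2 → ∃ p : ℝ, 0 < p ∧ P (s i) = (-1) ^ (k + 1) * p := by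
    intro i k h
    obtain ⟨p, hp, h0, h1⟩ := aux_T_s n i k h
    rw [← hs] at h0 h1
    refine ⟨p / 2 ^ (n - 1), by positivity, ?_⟩
    have := hReval (s i)
    rw [hR, eval_sub, eval_mul, eval_C, h0, h1] at this
    field_simp
    linarith
  have hlt : ∀ i j, i < n → j < n → x i < x j → i < j := by
    intro i j hi hj hij
    by_contra! hle
    rcases hle.lt_or_eq with h | h
    · have := hmono j i h hi
      linarith
    · subst h; exact lt_irrefl _ hij
  have hsq : ∀ k : ℕ, ((-1 : ℝ) ^ k) * (-1) ^ k = 1 := fun k => by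
    rw [← mul_pow]; simp
  constructor
  · intro hcp
    have key : ∀ i, ∃ j, i < n → j < n ∧ t i < x j ∧ (i < n - 1 → x j < s i) := by
      intro i
      by_cases hi : i < n
      swap
      · exact ⟨0, fun h => absurd h hi⟩
      by_cases hi2 : i < n - 1
      · obtain ⟨k, hk⟩ : ∃ k, n = i + k + 2 := ⟨n - i - 2, by omega⟩
        obtain ⟨p, hp, hp'⟩ := hPt i (k + 1) (by omega)
        obtain ⟨q, hq, hq'⟩ := hPs i k hk
        have hneg : P (t i) * P (s i) < 0 := by
          have : P (t i) * P (s i) = -(c * p * q) := by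
            rw [hp', hq']
            linear_combination (-c * p * q) * hsq (k + 1)
          rw [this]
          have : 0 < c * p * q := by positivity
          linarith
        obtain ⟨j, hj, ha, hb⟩ := aux_mid n x _ _ (hts i (by omega)) hneg
        exact ⟨j, fun _ => ⟨hj, ha, fun _ => hb⟩⟩
      · obtain ⟨p, hp, hp'⟩ := hPt i 0 (by omega)
        have hneg : P (t i) < 0 := by
          rw [hp']
          have : 0 < c * p := by positivity
          simp only [pow_zero]
          linarith
        obtain ⟨j, hj, ha⟩ := aux_top n x _ hneg
        exact ⟨j, fun _ => ⟨hj, ha, fun h => absurd h hi2⟩⟩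
    choose σ hσ using key
    have hid := aux_sigma n σ (fun i hi => (hσ i hi).1) (fun i hi => by
      obtain ⟨a1, a2, a3⟩ := hσ i (by omega)
      obtain ⟨b1, b2, b3⟩ := hσ (i + 1) hi
      have := a3 (by omega)
      have := hst i (by omega)
      exact hlt _ _ a1 b1 (by linarith))
    refine ⟨fun i hi => ?_, ?_⟩
    · obtain ⟨a1, a2, a3⟩ := hσ i (by omega)
      rw [hid i (by omega)] at a2 a3
      exact ⟨a2, a3 hi⟩
    · obtain ⟨a1, a2, a3⟩ := hσ (n - 1) (by omega)
      rw [hid (n - 1) (by omega)] at a2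
      exact a2
  · intro hcn
    have key : ∀ i, ∃ j, i < n → j < n ∧ x j < t i ∧ (1 ≤ i → s (i - 1) < x j) := by
      intro i
      by_cases hi : i < n
      swap
      · exact ⟨0, fun h => absurd h hi⟩
      rcases i with _ | i
      · obtain ⟨p, hp, hp'⟩ := hPt 0 (n - 1) (by omega)
        have hneg : (-1) ^ n * P (t 0) < 0 := by
          have e : ((-1 : ℝ)) ^ n = (-1) ^ (n - 1) * (-1) := by
            rw [← pow_succ]; congr 1; omega
          have : (-1) ^ n * P (t 0) = c * p := by
            rw [hp', e]
            linear_combination (c * p) * hsq (n - 1)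
          rw [this]
          exact mul_neg_of_neg_of_pos hcn hp
        obtain ⟨j, hj, ha⟩ := aux_bot n x _ hneg
        exact ⟨j, fun _ => ⟨hj, ha, fun h => by omega⟩⟩
      · obtain ⟨k, hk⟩ : ∃ k, n = i + k + 2 := ⟨n - i - 2, by omega⟩
        obtain ⟨p, hp, hp'⟩ := hPt (i + 1) k (by omega)
        obtain ⟨q, hq, hq'⟩ := hPs i k hk
        have hneg : P (s i) * P (t (i + 1)) < 0 := by
          have : P (s i) * P (t (i + 1)) = c * (p * q) := by
            rw [hp', hq', pow_succ]
            linear_combination (c * p * q) * hsq k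
          rw [this]
          exact mul_neg_of_neg_of_pos hcn (by positivity)
        obtain ⟨j, hj, ha, hb⟩ := aux_mid n x _ _ (hst i (by omega)) hneg
        exact ⟨j, fun _ => ⟨hj, hb, fun _ => ha⟩⟩
    choose σ hσ using key
    have hid := aux_sigma n σ (fun i hi => (hσ i hi).1) (fun i hi => by
      obtain ⟨a1, a2, a3⟩ := hσ i (by omega)
      obtain ⟨b1, b2, b3⟩ := hσ (i + 1) hi
      have h3 := b3 (by omega)
      rw [Nat.add_sub_cancel] at h3
      have := hts i (by omega)
      exact hlt _ _ a1 b1 (by linarith))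
    refine ⟨?_, fun i hi1 hi => ?_⟩
    · obtain ⟨a1, a2, a3⟩ := hσ 0 (by omega)
      rw [hid 0 (by omega)] at a2
      exact a2
    · obtain ⟨a1, a2, a3⟩ := hσ i hi
      rw [hid i hi] at a2 a3
      exact ⟨a3 hi1, a2⟩
end
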